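/- arXiv:math/0610495 — 5 statements merged into one kernel-verified Lean document; each statement's English description precedes it below -/
import Mathlib

section
/- Let α1, α2, β be complex numbers with |Re α1|, |Re α2|, |Re β| < 1/8 (so that all Euler products converge). Then A_ζ(−β, α2, −α1; α1, α2, β) = A(α1+β), where A(x) := ∏_p (1−p^{−1−x})(1−2p^{−1}+p^{−1−x})/(1−p^{−1})^2, the product being over all primes p. -/
open Complex

noncomputable section

/-- The cast of a prime number to `ℂ`. -/
def pc (p : Nat.Primes) : ℂ := ((p : ℕ) : ℂ)

/-- The local (at the prime `p`) factor of the Euler product `A_ζ(α1,α2,β;γ1,γ2,δ)`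
appearing in the three-over-three ratios conjecture. -/
def AzetaFactor (a1 a2 b g1 g2 d : ℂ) (p : Nat.Primes) : ℂ :=
  ((1 - pc p ^ (-1 - g1 - d)) * (1 - pc p ^ (-1 - g2 - d)) /
      ((1 - pc p ^ (-1 - a1 - d)) * (1 - pc p ^ (-1 - a2 - d)) *
        (1 - pc p ^ (-1 - g1 - b)) * (1 - pc p ^ (-1 - g2 - b)))) *
    (1 - pc p ^ (b - d) - pc p ^ (-1 - g1 - b) + pc p ^ (-1 - g1 - d)
      - pc p ^ (-1 - g2 - b) + pc p ^ (-1 - g2 - d)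
      + pc p ^ (-2 - g1 - g2 - 2 * b) - pc p ^ (-2 - g1 - g2 - b - d)
      + pc p ^ (b - d) * (1 - pc p ^ (-1 - a1 - b)) * (1 - pc p ^ (-1 - a2 - b)))

/-- The Euler product `A_ζ(α1,α2,β;γ1,γ2,δ)` over all primes. -/
def Azeta (a1 a2 b g1 g2 d : ℂ) : ℂ := ∏' p : Nat.Primes, AzetaFactor a1 a2 b g1 g2 d p

/-- The Euler product `A(x) = ∏_p (1−p^{−1−x})(1−2p^{−1}+p^{−1−x})/(1−p^{−1})^2`. -/
def Aeuler (x : ℂ) : ℂ :=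
  ∏' p : Nat.Primes,
    ((1 - pc p ^ (-1 - x)) * (1 - 2 * (pc p)⁻¹ + pc p ^ (-1 - x))) / (1 - (pc p)⁻¹) ^ 2

lemma pc_ne (p : Nat.Primes) : pc p ≠ 0 := by
  unfold pc; exact_mod_cast p.2.ne_zero

lemma one_sub_pc_ne (p : Nat.Primes) (s : ℂ) (hs : s.re < 0) : 1 - pc p ^ s ≠ 0 := by
  intro h
  have h1 : pc p ^ s = 1 := (sub_eq_zero.mp h).symm
  have h2 : ‖pc p ^ s‖ = 1 := by rw [h1]; simp
  unfold pc at h2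
  rw [Complex.norm_natCast_cpow_of_pos p.2.pos] at h2
  have h3 : ((p : ℕ) : ℝ) ^ s.re < 1 :=
    Real.rpow_lt_one_of_one_lt_of_neg (by exact_mod_cast p.2.one_lt) hs
  linarith

lemma alg_id (P X Y Z : ℂ) (hX : X ≠ 0) (hZ : Z ≠ 0) (h1 : 1 - P * Y * Z ≠ 0)
    (h2 : 1 - P * Y * X⁻¹ ≠ 0) :
    ((1 - P * X * Z) * (1 - P * Y * Z) /
      ((1 - P) * (1 - P * Y * Z) * (1 - P) * (1 - P * Y * X⁻¹))) *
    (1 - X * Z - P + P * X * Z - P * Y * X⁻¹ + P * Y * Z + P * P * Y * X⁻¹ - P * P * Y * Z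
      + X * Z * (1 - P * X⁻¹ * Z⁻¹) * (1 - P * Y * X⁻¹)) =
    (1 - P * X * Z) * (1 - 2 * P + P * X * Z) / (1 - P) ^ 2 := by
  have e : (1 - X * Z - P + P * X * Z - P * Y * X⁻¹ + P * Y * Z + P * P * Y * X⁻¹ - P * P * Y * Z
      + X * Z * (1 - P * X⁻¹ * Z⁻¹) * (1 - P * Y * X⁻¹)) =
      (1 - P * Y * X⁻¹) * (1 - 2 * P + P * X * Z) := by
    field_simp
    ring
  rw [e]
  generalize 1 - P * Y * X⁻¹ = U at *
  generalize 1 - P * Y * Z = V at *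
  by_cases hP : 1 - P = 0
  · simp [hP]
  · field_simp

/-- `A_ζ(−β, α2, −α1; α1, α2, β) = A(α1+β)`. -/
theorem stmt_6 (a1 a2 b : ℂ)
    (h1 : |a1.re| < 1 / 8) (h2 : |a2.re| < 1 / 8) (h3 : |b.re| < 1 / 8) :
    Azeta (-b) a2 (-a1) a1 a2 b = Aeuler (a1 + b) := by
  unfold Azeta Aeuler
  congr 1
  funext p
  have hp := pc_ne p
  have i1 : (-1 - a2 - b).re < 0 := by
    simp only [sub_re, neg_re, one_re]
    linarith [(abs_lt.mp h2).1, (abs_lt.mp h3).1]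
  have i2 : (-1 - a2 - -a1).re < 0 := by
    simp only [sub_re, neg_re, one_re]
    linarith [(abs_lt.mp h2).1, (abs_lt.mp h1).2]
  have n1 := one_sub_pc_ne p _ i1
  have n2 := one_sub_pc_ne p _ i2
  have hX : pc p ^ (-a1) ≠ 0 := by simp [Complex.cpow_eq_zero_iff, hp]
  have hZ : pc p ^ (-b) ≠ 0 := by simp [Complex.cpow_eq_zero_iff, hp]
  have iX : (pc p ^ (-a1))⁻¹ = pc p ^ a1 := by rw [Complex.cpow_neg, inv_inv]
  have iZ : (pc p ^ (-b))⁻¹ = pc p ^ b := by rw [Complex.cpow_neg, inv_inv]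
  have iP : (pc p)⁻¹ = pc p ^ (-1 : ℂ) := by rw [Complex.cpow_neg_one]
  have key := alg_id (pc p ^ (-1 : ℂ)) (pc p ^ (-a1)) (pc p ^ (-a2)) (pc p ^ (-b)) hX hZ
  rw [iX, iZ] at key
  simp only [← Complex.cpow_add _ _ hp] at key
  unfold AzetaFactor
  rw [iP]
  have e1 : -1 - a2 - b = -1 + -a2 + -b := by ring
  have e2 : -1 - a2 - -a1 = -1 + -a2 + a1 := by ring
  rw [e1] at n1 ⊢
  rw [e2] at n2 ⊢
  have k := key n1 n2
  rw [show -1 - a1 - b = -1 + -a1 + -b by ring, show -1 - -b - b = (-1 : ℂ) by ring,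
    show -1 - a1 - -a1 = (-1 : ℂ) by ring, show -a1 - b = -a1 + -b by ring,
    show -2 - a1 - a2 - 2 * -a1 = -1 + -1 + -a2 + a1 by ring,
    show -2 - a1 - a2 - -a1 - b = -1 + -1 + -a2 + -b by ring,
    show -1 - -b - -a1 = -1 + a1 + b by ring,
    show -1 - (a1 + b) = -1 + -a1 + -b by ring]
  exact k

end
end

section
/- Let α1, α2, β be complex numbers with |Re α1|, |Re α2|, |Re β| < 1/8. Then the triple mixed partial derivative (∂/∂α1)(∂/∂α2)(∂/∂β) of A_ζ(α1,α2,β;γ1,γ2,δ), evaluated at γ1 = α1, γ2 = α2, δ = β, equals Q(α1+β, α2+β), where Q(x,y) := −Σ_p log^3 p / [ p^{2+x+y} (1−p^{−1−x})(1−p^{−1−y}) ], the sum being over all primes p. -/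
open Complex

noncomputable section

/-- `Q(x,y) = −Σ_p log³p / [p^{2+x+y}(1−p^{−1−x})(1−p^{−1−y})]`. -/
def Qeuler (x y : ℂ) : ℂ :=
  -∑' p : Nat.Primes,
      (Real.log ((p : ℕ) : ℝ) : ℂ) ^ 3 /
        (pc p ^ (2 + x + y) * (1 - pc p ^ (-1 - x)) * (1 - pc p ^ (-1 - y)))

namespace Aux

/-- `p^{-1-x-y}` -/
def E (p : Nat.Primes) (x y : ℂ) : ℂ := pc p ^ (-1 - x - y)

/-- `log p` -/
def L (p : Nat.Primes) : ℂ := (Real.log ((p : ℕ) : ℝ) : ℂ)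

/-- the strip -/
def S : Set ℂ := {z | |z.re| < 1 / 8}

/-- `p^{-3/4}` -/
def w (p : Nat.Primes) : ℝ := ((p : ℕ) : ℝ) ^ (-(3 / 4) : ℝ)

lemma isOpen_S : IsOpen S :=
  isOpen_lt (continuous_abs.comp Complex.continuous_re) continuous_const

lemma pc_ne (p : Nat.Primes) : pc p ≠ 0 := by
  unfold pc
  exact_mod_cast p.2.ne_zero

lemma log_pc (p : Nat.Primes) : Complex.log (pc p) = L p := by
  unfold pc L
  exact (Complex.natCast_log).symm

lemma E_comm (p : Nat.Primes) (x y : ℂ) : E p x y = E p y x := by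
  unfold E; congr 1; ring

lemma hasDerivAt_E (p : Nat.Primes) (x y : ℂ) :
    HasDerivAt (fun y => E p x y) (-L p * E p x y) y := by
  have h : HasDerivAt (fun y : ℂ => -1 - x - y) (-1) y := by
    simpa using (hasDerivAt_id y).const_sub (-1 - x)
  have := h.const_cpow (c := pc p) (Or.inl (pc_ne p))
  rw [log_pc] at this
  refine this.congr_deriv ?_
  unfold E; ring

lemma hasDerivAt_E' (p : Nat.Primes) (x y : ℂ) :
    HasDerivAt (fun x => E p x y) (-L p * E p x y) x := by
  have := hasDerivAt_E p y x
  rw [E_comm p y x] at this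
  simpa only [E_comm p y] using this

lemma w_pos (p : Nat.Primes) : 0 < w p :=
  Real.rpow_pos_of_pos (by exact_mod_cast p.2.pos) _

lemma w_le (p : Nat.Primes) : w p ≤ 3 / 5 := by
  have h2 : (2 : ℝ) ≤ ((p : ℕ) : ℝ) := by exact_mod_cast p.2.two_le
  have h1 : w p ≤ (2 : ℝ) ^ (-(3 / 4) : ℝ) :=
    Real.rpow_le_rpow_of_nonpos (by norm_num) h2 (by norm_num)
  refine h1.trans ?_
  have h4 : ((2 : ℝ) ^ (-(3 / 4) : ℝ)) ^ 4 = 1 / 8 := by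
    rw [← Real.rpow_natCast, ← Real.rpow_mul (by norm_num)]
    norm_num
  refine le_of_pow_le_pow_left₀ (n := 4) (by norm_num) (by norm_num) ?_
  rw [h4]; norm_num

lemma norm_E_le {x y : ℂ} (p : Nat.Primes) (hx : x ∈ S) (hy : y ∈ S) : ‖E p x y‖ ≤ w p := by
  unfold E pc w
  rw [Complex.norm_natCast_cpow_of_pos p.2.pos]
  have hx' : |x.re| < 1 / 8 := hx
  have hy' : |y.re| < 1 / 8 := hy
  rw [abs_lt] at hx' hy'
  apply Real.rpow_le_rpow_of_exponent_le
  · exact_mod_cast p.2.one_lt.le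
  · simp; linarith

lemma norm_sub_ge {z : ℂ} (p : Nat.Primes) (h : ‖z‖ ≤ w p) : 2 / 5 ≤ ‖1 - z‖ := by
  have := norm_sub_norm_le (1 : ℂ) z
  have := w_le p
  simp at *; linarith

lemma norm_sub_le {z : ℂ} (p : Nat.Primes) (h : ‖z‖ ≤ w p) : ‖1 - z‖ ≤ 2 := by
  have := _root_.norm_sub_le (1 : ℂ) z
  have := w_le p
  simp at *; linarith

lemma sub_ne {z : ℂ} (p : Nat.Primes) (h : ‖z‖ ≤ w p) : 1 - z ≠ 0 := by
  have := norm_sub_ge p h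
  intro h0; rw [h0] at this; norm_num at this

lemma factor_eq (x1 x2 y a1 a2 b : ℂ) (p : Nat.Primes) :
    AzetaFactor x1 x2 y a1 a2 b p =
      ((1 - E p a1 b) * (1 - E p a2 b) /
        ((1 - E p x1 b) * (1 - E p x2 b) * (1 - E p a1 y) * (1 - E p a2 y))) *
      ((1 - E p a1 y) * (1 - E p a2 y) + E p a1 b + E p a2 b - E p x1 b - E p x2 b
        + E p x1 b * E p x2 y - E p a1 b * E p a2 y) := by
  have hp := pc_ne p
  have e1 : pc p ^ (-2 - a1 - a2 - 2 * y) = E p a1 y * E p a2 y := by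
    unfold E; rw [← Complex.cpow_add _ _ hp]; congr 1; ring
  have e2 : pc p ^ (-2 - a1 - a2 - y - b) = E p a1 b * E p a2 y := by
    unfold E; rw [← Complex.cpow_add _ _ hp]; congr 1; ring
  have e3 : E p x1 b = pc p ^ (y - b) * E p x1 y := by
    unfold E; rw [← Complex.cpow_add _ _ hp]; congr 1; ring
  have e4 : E p x2 b = pc p ^ (y - b) * E p x2 y := by
    unfold E; rw [← Complex.cpow_add _ _ hp]; congr 1; ring
  unfold AzetaFactor
  rw [e1, e2]
  simp only [← E.eq_1]
  congr 1
  rw [e3, e4]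
  ring

/-- derivative in `y` at `b` of the local factor -/
def F (a1 a2 b x1 x2 : ℂ) (p : Nat.Primes) : ℂ :=
  -L p * (E p a1 b / (1 - E p a1 b) + E p a2 b / (1 - E p a2 b)
    + (-E p a1 b - E p a2 b + E p a1 b * E p a2 b + E p x1 b * E p x2 b) /
      ((1 - E p x1 b) * (1 - E p x2 b)))

/-- derivative of `F` in `x2` at `a2` -/
def G (a1 a2 b x1 : ℂ) (p : Nat.Primes) : ℂ :=
  L p ^ 2 * (E p a2 b * (E p x1 b - E p a1 b - E p a2 b * (1 - E p a1 b)) /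
    ((1 - E p x1 b) * (1 - E p a2 b) ^ 2))

lemma prod4 {a b c d : ℂ} (ha : 2 / 5 ≤ ‖a‖) (hb : 2 / 5 ≤ ‖b‖) (hc : 2 / 5 ≤ ‖c‖)
    (hd : 2 / 5 ≤ ‖d‖) : (2 / 5) ^ 4 ≤ ‖a * b * c * d‖ := by
  rw [norm_mul, norm_mul, norm_mul]
  calc ((2 : ℝ) / 5) ^ 4 = 2 / 5 * (2 / 5) * (2 / 5) * (2 / 5) := by norm_num
    _ ≤ _ := by gcongr

lemma div_bound {n d : ℂ} {c W k : ℝ} (hn : ‖n‖ ≤ c * W) (hc : 0 ≤ c * W) (hk : 0 < k)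
    (hd : k ≤ ‖d‖) : ‖n / d‖ ≤ c / k * W := by
  rw [norm_div]
  calc ‖n‖ / ‖d‖ ≤ c * W / k := by gcongr
    _ = _ := by ring

lemma mul_bd {a b : ℂ} {A B : ℝ} (ha : ‖a‖ ≤ A) (hb : ‖b‖ ≤ B) : ‖a * b‖ ≤ A * B := by
  rw [norm_mul]
  exact mul_le_mul ha hb (norm_nonneg _) ((norm_nonneg _).trans ha)
lemma add_bd {a b : ℂ} {A B : ℝ} (ha : ‖a‖ ≤ A) (hb : ‖b‖ ≤ B) : ‖a + b‖ ≤ A + B :=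
  (norm_add_le _ _).trans (add_le_add ha hb)
lemma sub_bd {a b : ℂ} {A B : ℝ} (ha : ‖a‖ ≤ A) (hb : ‖b‖ ≤ B) : ‖a - b‖ ≤ A + B :=
  (_root_.norm_sub_le _ _).trans (add_le_add ha hb)

lemma diff_bd {r1 r2 s1 s2 : ℂ} {W : ℝ} (hW : 0 ≤ W) (hW1 : W ≤ 1) (hr1 : ‖r1‖ ≤ W)
    (hr2 : ‖r2‖ ≤ W) (hs1 : ‖s1‖ ≤ W) (hs2 : ‖s2‖ ≤ W) :
    ‖(1 - r1) * (1 - r2) - (1 - s1) * (1 - s2)‖ ≤ 6 * W := by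
  have h := add_bd (sub_bd (add_bd hs1 hs2) (add_bd hr1 hr2))
    (sub_bd (mul_bd hr1 hr2) (mul_bd hs1 hs2))
  have e : (1 - r1) * (1 - r2) - (1 - s1) * (1 - s2)
    = s1 + s2 - (r1 + r2) + (r1 * r2 - s1 * s2) := by ring
  rw [e]
  refine h.trans ?_
  nlinarith

lemma factor_bound {x1 x2 y a1 a2 b : ℂ} (hx1 : x1 ∈ S) (hx2 : x2 ∈ S) (hy : y ∈ S)
    (h1 : a1 ∈ S) (h2 : a2 ∈ S) (hb : b ∈ S) (p : Nat.Primes) :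
    ‖AzetaFactor x1 x2 y a1 a2 b p - 1‖ ≤ 40 / (2 / 5) ^ 4 * w p ^ 2 := by
  rw [factor_eq]
  have hr1 := norm_E_le p h1 hb
  have hr2 := norm_E_le p h2 hb
  have hs1 := norm_E_le p hx1 hb
  have hs2 := norm_E_le p hx2 hb
  have ht1 := norm_E_le p h1 hy
  have ht2 := norm_E_le p h2 hy
  have hv2 := norm_E_le p hx2 hy
  have hw0 := (w_pos p).le
  have hw1 : w p ≤ 1 := (w_le p).trans (by norm_num)
  generalize E p a1 b = r1 at *
  generalize E p a2 b = r2 at *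
  generalize E p x1 b = s1 at *
  generalize E p x2 b = s2 at *
  generalize E p a1 y = t1 at *
  generalize E p a2 y = t2 at *
  generalize E p x2 y = v2 at *
  have e : (1 - r1) * (1 - r2) / ((1 - s1) * (1 - s2) * (1 - t1) * (1 - t2)) *
      ((1 - t1) * (1 - t2) + r1 + r2 - s1 - s2 + s1 * v2 - r1 * t2) - 1 =
      ((r1 + r2 - (s1 + s2)) * ((1 - r1) * (1 - r2) - (1 - t1) * (1 - t2)) +
        (1 - t1) * (1 - t2) * (r1 * r2 - s1 * s2) +
        (1 - r1) * (1 - r2) * (s1 * v2 - r1 * t2)) /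
        ((1 - s1) * (1 - s2) * (1 - t1) * (1 - t2)) := by
    have := sub_ne p (by assumption : ‖s1‖ ≤ w p)
    have := sub_ne p (by assumption : ‖s2‖ ≤ w p)
    have := sub_ne p (by assumption : ‖t1‖ ≤ w p)
    have := sub_ne p (by assumption : ‖t2‖ ≤ w p)
    field_simp
    ring
  rw [e]
  refine div_bound ?_ (by positivity) (by norm_num) (prod4 (norm_sub_ge p ‹_›)
    (norm_sub_ge p ‹_›) (norm_sub_ge p ‹_›) (norm_sub_ge p ‹_›))
  have h := add_bd (add_bd
    (mul_bd (sub_bd (add_bd hr1 hr2) (add_bd hs1 hs2)) (diff_bd hw0 hw1 hr1 hr2 ht1 ht2))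
    (mul_bd (mul_bd (norm_sub_le p ht1) (norm_sub_le p ht2))
      (sub_bd (mul_bd hr1 hr2) (mul_bd hs1 hs2))))
    (mul_bd (mul_bd (norm_sub_le p hr1) (norm_sub_le p hr2))
      (sub_bd (mul_bd hs1 hv2) (mul_bd hr1 ht2)))
  refine h.trans (le_of_eq ?_)
  ring


lemma F_bound {x1 x2 a1 a2 b : ℂ} (hx1 : x1 ∈ S) (hx2 : x2 ∈ S)
    (h1 : a1 ∈ S) (h2 : a2 ∈ S) (hb : b ∈ S) (p : Nat.Primes) :
    ‖F a1 a2 b x1 x2 p‖ ≤ ‖L p‖ * (28 / (2 / 5) ^ 4 * w p ^ 2) := by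
  unfold F
  rw [norm_mul, norm_neg]
  refine mul_le_mul_of_nonneg_left ?_ (norm_nonneg _)
  have hr1 := norm_E_le p h1 hb
  have hr2 := norm_E_le p h2 hb
  have hs1 := norm_E_le p hx1 hb
  have hs2 := norm_E_le p hx2 hb
  have hw0 := (w_pos p).le
  have hw1 : w p ≤ 1 := (w_le p).trans (by norm_num)
  generalize E p a1 b = r1 at *
  generalize E p a2 b = r2 at *
  generalize E p x1 b = s1 at *
  generalize E p x2 b = s2 at *
  have e : r1 / (1 - r1) + r2 / (1 - r2) + (-r1 - r2 + r1 * r2 + s1 * s2) /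
      ((1 - s1) * (1 - s2)) =
      ((r1 + r2) * ((1 - s1) * (1 - s2) - (1 - r1) * (1 - r2)) -
        (r1 * r2 + r1 * r2) * ((1 - s1) * (1 - s2)) +
        (r1 * r2 + s1 * s2) * ((1 - r1) * (1 - r2))) /
        ((1 - s1) * (1 - s2) * (1 - r1) * (1 - r2)) := by
    have := sub_ne p hr1
    have := sub_ne p hr2
    have := sub_ne p hs1
    have := sub_ne p hs2
    field_simp
    ring
  rw [e]
  refine div_bound ?_ (by positivity) (by norm_num) (prod4 (norm_sub_ge p ‹_›)
    (norm_sub_ge p ‹_›) (norm_sub_ge p ‹_›) (norm_sub_ge p ‹_›))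
  have h := add_bd (sub_bd
    (mul_bd (add_bd hr1 hr2) (diff_bd hw0 hw1 hs1 hs2 hr1 hr2))
    (mul_bd (add_bd (mul_bd hr1 hr2) (mul_bd hr1 hr2))
      (mul_bd (norm_sub_le p hs1) (norm_sub_le p hs2))))
    (mul_bd (add_bd (mul_bd hr1 hr2) (mul_bd hs1 hs2))
      (mul_bd (norm_sub_le p hr1) (norm_sub_le p hr2)))
  refine h.trans (le_of_eq ?_)
  ring

lemma G_bound {x1 a1 a2 b : ℂ} (hx1 : x1 ∈ S)
    (h1 : a1 ∈ S) (h2 : a2 ∈ S) (hb : b ∈ S) (p : Nat.Primes) :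
    ‖G a1 a2 b x1 p‖ ≤ ‖L p‖ ^ 2 * (4 / (2 / 5) ^ 3 * w p ^ 2) := by
  unfold G
  rw [norm_mul, norm_pow]
  refine mul_le_mul_of_nonneg_left ?_ (by positivity)
  have hr1 := norm_E_le p h1 hb
  have hr2 := norm_E_le p h2 hb
  have hs1 := norm_E_le p hx1 hb
  have hw0 := (w_pos p).le
  generalize E p a1 b = r1 at *
  generalize E p a2 b = r2 at *
  generalize E p x1 b = s1 at *
  refine div_bound ?_ (by positivity) (by norm_num) ?_
  · have h := mul_bd hr2 (sub_bd (sub_bd hs1 hr1) (mul_bd hr2 (norm_sub_le p hr1)))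
    refine h.trans (le_of_eq ?_)
    ring
  · rw [norm_mul, norm_pow]
    have := norm_sub_ge p hs1
    have := norm_sub_ge p hr2
    calc ((2 : ℝ) / 5) ^ 3 = 2 / 5 * (2 / 5) ^ 2 := by norm_num
      _ ≤ _ := by gcongr

lemma norm_L (p : Nat.Primes) : ‖L p‖ = Real.log ((p : ℕ) : ℝ) := by
  unfold L
  rw [Complex.norm_real, Real.norm_of_nonneg]
  exact Real.log_natCast_nonneg _

lemma norm_L_le (p : Nat.Primes) : ‖L p‖ ≤ 8 * ((p : ℕ) : ℝ) ^ (1 / 8 : ℝ) := by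
  rw [norm_L]
  have := Real.log_le_rpow_div (x := ((p : ℕ) : ℝ)) (by positivity) (ε := 1 / 8) (by norm_num)
  linarith

lemma w_sq (p : Nat.Primes) : w p ^ 2 = ((p : ℕ) : ℝ) ^ (-(3 / 2) : ℝ) := by
  unfold w
  rw [← Real.rpow_natCast, ← Real.rpow_mul (by positivity)]
  norm_num

lemma summable_w : Summable fun p : Nat.Primes => w p ^ 2 := by
  simp only [w_sq]
  exact Nat.Primes.summable_rpow.mpr (by norm_num)

lemma summable_L2 (c : ℝ) (hc : 0 ≤ c) :
    Summable fun p : Nat.Primes => ‖L p‖ ^ 2 * (c * w p ^ 2) := by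
  have h : Summable fun p : Nat.Primes => (64 * c) * ((p : ℕ) : ℝ) ^ (-(5 / 4) : ℝ) :=
    (Nat.Primes.summable_rpow.mpr (by norm_num)).mul_left _
  refine h.of_nonneg_of_le (fun p => by positivity) fun p => ?_
  have hp : (0 : ℝ) < ((p : ℕ) : ℝ) := by exact_mod_cast p.2.pos
  have e : ((p : ℕ) : ℝ) ^ (-(5 / 4) : ℝ) = (((p : ℕ) : ℝ) ^ (1 / 8 : ℝ)) ^ 2 * w p ^ 2 := by
    rw [w_sq, ← Real.rpow_natCast, ← Real.rpow_mul hp.le, ← Real.rpow_add hp]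
    norm_num
  calc ‖L p‖ ^ 2 * (c * w p ^ 2) ≤ (8 * ((p : ℕ) : ℝ) ^ (1 / 8 : ℝ)) ^ 2 * (c * w p ^ 2) := by
        gcongr
        exact norm_L_le p
    _ = _ := by rw [e]; ring

lemma summable_L1 (c : ℝ) (hc : 0 ≤ c) :
    Summable fun p : Nat.Primes => ‖L p‖ * (c * w p ^ 2) := by
  have h := ((summable_w.mul_left c).add (summable_L2 c hc))
  refine h.of_nonneg_of_le (fun p => by positivity) fun p => ?_
  have : ‖L p‖ ≤ 1 + ‖L p‖ ^ 2 := by nlinarith [sq_nonneg (‖L p‖ - 1), norm_nonneg (L p)]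
  have h0 : 0 ≤ c * w p ^ 2 := by positivity
  nlinarith

lemma factor_at_b {x1 x2 a1 a2 b : ℂ} (hx1 : x1 ∈ S) (hx2 : x2 ∈ S)
    (h1 : a1 ∈ S) (h2 : a2 ∈ S) (hb : b ∈ S) (p : Nat.Primes) :
    AzetaFactor x1 x2 b a1 a2 b p = 1 := by
  rw [factor_eq]
  have hr1 := sub_ne p (norm_E_le p h1 hb)
  have hr2 := sub_ne p (norm_E_le p h2 hb)
  have hs1 := sub_ne p (norm_E_le p hx1 hb)
  have hs2 := sub_ne p (norm_E_le p hx2 hb)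
  field_simp
  ring

lemma factor_diff {x1 x2 y a1 a2 b : ℂ} (hx1 : x1 ∈ S) (hx2 : x2 ∈ S) (hy : y ∈ S)
    (h1 : a1 ∈ S) (h2 : a2 ∈ S) (hb : b ∈ S) (p : Nat.Primes) :
    DifferentiableAt ℂ (fun y => AzetaFactor x1 x2 y a1 a2 b p) y := by
  simp only [factor_eq]
  have hs1 := sub_ne p (norm_E_le p hx1 hb)
  have hs2 := sub_ne p (norm_E_le p hx2 hb)
  have ht1 := sub_ne p (norm_E_le p h1 hy)
  have ht2 := sub_ne p (norm_E_le p h2 hy)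
  have d1 := (hasDerivAt_E p a1 y).differentiableAt
  have d2 := (hasDerivAt_E p a2 y).differentiableAt
  have d3 := (hasDerivAt_E p x2 y).differentiableAt
  refine DifferentiableAt.mul (DifferentiableAt.div (by fun_prop) (by fun_prop) ?_) (by fun_prop)
  simp [hs1, hs2, ht1, ht2]

lemma factor_deriv {x1 x2 a1 a2 b : ℂ} (hx1 : x1 ∈ S) (hx2 : x2 ∈ S)
    (h1 : a1 ∈ S) (h2 : a2 ∈ S) (hb : b ∈ S) (p : Nat.Primes) :
    HasDerivAt (fun y => AzetaFactor x1 x2 y a1 a2 b p) (F a1 a2 b x1 x2 p) b := by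
  simp only [factor_eq]
  have hr1 := sub_ne p (norm_E_le p h1 hb)
  have hr2 := sub_ne p (norm_E_le p h2 hb)
  have hs1 := sub_ne p (norm_E_le p hx1 hb)
  have hs2 := sub_ne p (norm_E_le p hx2 hb)
  have d1 := hasDerivAt_E p a1 b
  have d2 := hasDerivAt_E p a2 b
  have d3 := hasDerivAt_E p x2 b
  have hden := (((d1.const_sub 1).const_mul ((1 - E p x1 b) * (1 - E p x2 b))).fun_mul
    (d2.const_sub 1))
  have hq := (hasDerivAt_const b ((1 - E p a1 b) * (1 - E p a2 b))).fun_div hden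
    (by simp [hr1, hr2, hs1, hs2])
  have hbr := ((((((d1.const_sub 1).fun_mul (d2.const_sub 1)).add_const (E p a1 b)).add_const
    (E p a2 b)).sub_const (E p x1 b)).sub_const (E p x2 b)).fun_add (d3.const_mul (E p x1 b))
  have hbr2 := hbr.fun_sub (d2.const_mul (E p a1 b))
  refine (hq.fun_mul hbr2).congr_deriv ?_
  unfold F
  generalize E p a1 b = r1 at *
  generalize E p a2 b = r2 at *
  generalize E p x1 b = s1 at *
  generalize E p x2 b = s2 at *
  field_simp
  ring

lemma F_diff {x1 x2 a1 a2 b : ℂ} (hx1 : x1 ∈ S) (hx2 : x2 ∈ S) (hb : b ∈ S) (p : Nat.Primes) :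
    DifferentiableAt ℂ (fun x2 => F a1 a2 b x1 x2 p) x2 := by
  unfold F
  have hs1 := sub_ne p (norm_E_le p hx1 hb)
  have hs2 := sub_ne p (norm_E_le p hx2 hb)
  have d3 := (hasDerivAt_E' p x2 b).differentiableAt
  refine DifferentiableAt.const_mul (DifferentiableAt.const_add _
    (DifferentiableAt.div (by fun_prop) (by fun_prop) ?_)) _
  simp [hs1, hs2]

lemma F_deriv {x1 a1 a2 b : ℂ} (hx1 : x1 ∈ S) (h2 : a2 ∈ S) (hb : b ∈ S) (p : Nat.Primes) :
    HasDerivAt (fun x2 => F a1 a2 b x1 x2 p) (G a1 a2 b x1 p) a2 := by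
  unfold F
  have hs1 := sub_ne p (norm_E_le p hx1 hb)
  have hr2 := sub_ne p (norm_E_le p h2 hb)
  have d3 := hasDerivAt_E' p a2 b
  have hn := (d3.const_mul (E p x1 b)).const_add
    (-E p a1 b - E p a2 b + E p a1 b * E p a2 b)
  have hd := (d3.const_sub 1).const_mul (1 - E p x1 b)
  have hq := hn.fun_div hd (by simp [hs1, hr2])
  refine ((hq.const_add (E p a1 b / (1 - E p a1 b) + E p a2 b / (1 - E p a2 b))).const_mul
    (-L p)).congr_deriv ?_
  unfold G
  generalize E p a1 b = r1 at *
  generalize E p a2 b = r2 at *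
  generalize E p x1 b = s1 at *
  field_simp
  ring

lemma G_diff {x1 a1 a2 b : ℂ} (hx1 : x1 ∈ S) (h2 : a2 ∈ S) (hb : b ∈ S) (p : Nat.Primes) :
    DifferentiableAt ℂ (fun x1 => G a1 a2 b x1 p) x1 := by
  unfold G
  have hs1 := sub_ne p (norm_E_le p hx1 hb)
  have hr2 := sub_ne p (norm_E_le p h2 hb)
  have d3 := (hasDerivAt_E' p x1 b).differentiableAt
  refine DifferentiableAt.const_mul
    (DifferentiableAt.div (by fun_prop) (by fun_prop) ?_) _
  simp [hs1, hr2]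

lemma G_deriv {a1 a2 b : ℂ} (h1 : a1 ∈ S) (h2 : a2 ∈ S) (hb : b ∈ S) (p : Nat.Primes) :
    HasDerivAt (fun x1 => G a1 a2 b x1 p)
      (-(L p ^ 3 * (E p a1 b * E p a2 b) / ((1 - E p a1 b) * (1 - E p a2 b)))) a1 := by
  unfold G
  have hr1 := sub_ne p (norm_E_le p h1 hb)
  have hr2 := sub_ne p (norm_E_le p h2 hb)
  have d3 := hasDerivAt_E' p a1 b
  have hn := (((d3.sub_const (E p a1 b)).sub_const
    (E p a2 b * (1 - E p a1 b))).const_mul (E p a2 b))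
  have hd := (d3.const_sub 1).mul_const ((1 - E p a2 b) ^ 2)
  have hq := hn.fun_div hd (by simp [hr1, hr2])
  refine (hq.const_mul (L p ^ 2)).congr_deriv ?_
  generalize E p a1 b = r1 at *
  generalize E p a2 b = r2 at *
  field_simp
  ring

lemma deriv_y {x1 x2 a1 a2 b : ℂ} (hx1 : x1 ∈ S) (hx2 : x2 ∈ S)
    (h1 : a1 ∈ S) (h2 : a2 ∈ S) (hb : b ∈ S) :
    deriv (fun y => Azeta x1 x2 y a1 a2 b) b = ∑' p, F a1 a2 b x1 x2 p := by
  have hone : Azeta x1 x2 b a1 a2 b = 1 := by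
    unfold Azeta
    simp only [factor_at_b hx1 hx2 h1 h2 hb, tprod_one]
  have hlog : ∀ p, logDeriv (fun y => AzetaFactor x1 x2 y a1 a2 b p) b = F a1 a2 b x1 x2 p := by
    intro p
    rw [logDeriv_apply, (factor_deriv hx1 hx2 h1 h2 hb p).deriv,
      factor_at_b hx1 hx2 h1 h2 hb, div_one]
  have hdiff : ∀ p : Nat.Primes,
      DifferentiableOn ℂ (fun y => AzetaFactor x1 x2 y a1 a2 b p) S := fun p y hy =>
    (factor_diff hx1 hx2 hy h1 h2 hb p).differentiableWithinAt
  have hmul : MultipliableLocallyUniformlyOn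
      (fun (p : Nat.Primes) y => AzetaFactor x1 x2 y a1 a2 b p) S := by
    have := Summable.multipliableLocallyUniformlyOn_one_add
      (f := fun (p : Nat.Primes) y => AzetaFactor x1 x2 y a1 a2 b p - 1) isOpen_S
      (summable_w.mul_left (40 / (2 / 5) ^ 4))
      (Filter.Eventually.of_forall fun p y hy => factor_bound hx1 hx2 hy h1 h2 hb p)
      (fun p => (hdiff p).continuousOn.sub continuousOn_const)
    simpa only [add_sub_cancel] using this
  have key := logDeriv_tprod_eq_tsum isOpen_S hb
    (f := fun (p : Nat.Primes) y => AzetaFactor x1 x2 y a1 a2 b p)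
    (fun p => by simp [factor_at_b hx1 hx2 h1 h2 hb]) hdiff
    (by
      simp only [hlog]
      exact Summable.of_norm_bounded (summable_L1 _ (by positivity))
        (fun p => F_bound hx1 hx2 h1 h2 hb p))
    hmul (by simp [factor_at_b hx1 hx2 h1 h2 hb])
  simp only [hlog] at key
  rw [← key]
  change _ = logDeriv (fun y => Azeta x1 x2 y a1 a2 b) b
  rw [logDeriv_apply, hone, div_one]

lemma deriv_x2 {x1 a1 a2 b : ℂ} (hx1 : x1 ∈ S)
    (h1 : a1 ∈ S) (h2 : a2 ∈ S) (hb : b ∈ S) :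
    deriv (fun x2 => deriv (fun y => Azeta x1 x2 y a1 a2 b) b) a2 = ∑' p, G a1 a2 b x1 p := by
  have he : (fun x2 => deriv (fun y => Azeta x1 x2 y a1 a2 b) b) =ᶠ[nhds a2]
      fun x2 => ∑' p, F a1 a2 b x1 x2 p := by
    filter_upwards [isOpen_S.mem_nhds h2] with x2 hx2 using deriv_y hx1 hx2 h1 h2 hb
  rw [he.deriv_eq]
  have := Complex.hasSum_deriv_of_summable_norm (F := fun p x2 => F a1 a2 b x1 x2 p)
    (summable_L1 (28 / (2 / 5) ^ 4) (by positivity))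
    (fun p x2 hx2 => (F_diff hx1 hx2 hb p).differentiableWithinAt) isOpen_S
    (fun p x2 hx2 => F_bound hx1 hx2 h1 h2 hb p) h2
  rw [← this.tsum_eq]
  exact tsum_congr fun p => (F_deriv hx1 h2 hb p).deriv

lemma deriv_x1 {a1 a2 b : ℂ} (h1 : a1 ∈ S) (h2 : a2 ∈ S) (hb : b ∈ S) :
    deriv (fun x1 => deriv (fun x2 => deriv (fun y => Azeta x1 x2 y a1 a2 b) b) a2) a1 =
      ∑' p, -(L p ^ 3 * (E p a1 b * E p a2 b) / ((1 - E p a1 b) * (1 - E p a2 b))) := by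
  have he : (fun x1 => deriv (fun x2 => deriv (fun y => Azeta x1 x2 y a1 a2 b) b) a2)
      =ᶠ[nhds a1] fun x1 => ∑' p, G a1 a2 b x1 p := by
    filter_upwards [isOpen_S.mem_nhds h1] with x1 hx1 using deriv_x2 hx1 h1 h2 hb
  rw [he.deriv_eq]
  have := Complex.hasSum_deriv_of_summable_norm (F := fun p x1 => G a1 a2 b x1 p)
    (summable_L2 (4 / (2 / 5) ^ 3) (by positivity))
    (fun p x1 hx1 => (G_diff hx1 h2 hb p).differentiableWithinAt) isOpen_S
    (fun p x1 hx1 => G_bound hx1 h1 h2 hb p) h1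
  rw [← this.tsum_eq]
  exact tsum_congr fun p => (G_deriv h1 h2 hb p).deriv

end Aux

/-- The triple mixed partial derivative `(∂/∂α1)(∂/∂α2)(∂/∂β)` of `A_ζ(α1,α2,β;γ1,γ2,δ)`,
evaluated at `γ1 = α1`, `γ2 = α2`, `δ = β`, equals `Q(α1+β, α2+β)`. -/
theorem stmt_8 (a1 a2 b : ℂ)
    (h1 : |a1.re| < 1 / 8) (h2 : |a2.re| < 1 / 8) (h3 : |b.re| < 1 / 8) :
    deriv (fun x1 : ℂ =>
        deriv (fun x2 : ℂ => deriv (fun y : ℂ => Azeta x1 x2 y a1 a2 b) b) a2) a1 =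
      Qeuler (a1 + b) (a2 + b) := by
  rw [Aux.deriv_x1 h1 h2 h3, tsum_neg]
  unfold Qeuler
  congr 1
  refine tsum_congr fun p => ?_
  have e1 : pc p ^ (-1 - (a1 + b)) = Aux.E p a1 b := by
    unfold Aux.E; congr 1; ring
  have e2 : pc p ^ (-1 - (a2 + b)) = Aux.E p a2 b := by
    unfold Aux.E; congr 1; ring
  have e3 : pc p ^ (2 + (a1 + b) + (a2 + b)) = (Aux.E p a1 b * Aux.E p a2 b)⁻¹ := by
    unfold Aux.E
    rw [← Complex.cpow_add _ _ (Aux.pc_ne p), ← Complex.cpow_neg]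
    congr 1; ring
  rw [e1, e2, e3]
  change Aux.L p ^ 3 * _ / _ = Aux.L p ^ 3 / _
  simp only [div_eq_mul_inv, mul_inv, inv_inv]
  ring

end
end

section
/- Let α1, α2, β be complex numbers with 0 < Re α1, Re α2, Re β < 1/8 and with α1+β, α2+β, α1−α2 all nonzero. Then the triple mixed partial derivative (∂/∂α1)(∂/∂α2)(∂/∂β) of G(α1,α2,β;γ1,γ2,δ) := Y(α1,α2,β;γ1,γ2,δ)·A_ζ(α1,α2,β;γ1,γ2,δ), evaluated at γ1 = α1, γ2 = α2, δ = β, equals the triple mixed partial derivative (∂/∂α1)(∂/∂α2)(∂/∂β) of A_ζ(α1,α2,β;γ1,γ2,δ) evaluated at the same point; that is, all contributions involving derivatives of the factor Y cancel on the diagonal. -/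
open Complex

noncomputable section

/-- The factor `Y(α1,α2,β;γ1,γ2,δ)` built out of values of the Riemann zeta function. -/
def Yfactor (a1 a2 b g1 g2 d : ℂ) : ℂ :=
  (riemannZeta (1 + a1 + b) * riemannZeta (1 + a2 + b) *
      riemannZeta (1 + g1 + d) * riemannZeta (1 + g2 + d)) /
    (riemannZeta (1 + a1 + d) * riemannZeta (1 + a2 + d) *
      riemannZeta (1 + g1 + b) * riemannZeta (1 + g2 + b))

/-- `G = Y · A_ζ`. -/
def Gfun (a1 a2 b g1 g2 d : ℂ) : ℂ := Yfactor a1 a2 b g1 g2 d * Azeta a1 a2 b g1 g2 d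

lemma factor_eq (x1 x2 y a1 a2 b : ℂ) (p : Nat.Primes) :
    AzetaFactor x1 x2 y a1 a2 b p =
      (1 - pc p ^ (-1 - a1 - b)) * (1 - pc p ^ (-1 - a2 - b)) *
      ((1 - pc p ^ (-1 - x1 - b))⁻¹ * (1 - pc p ^ (-1 - x2 - b))⁻¹ *
        (1 - pc p ^ (-1 - a1 - y))⁻¹ * (1 - pc p ^ (-1 - a2 - y))⁻¹) *
      (1 + (- pc p ^ (-1 - x1 - b) - pc p ^ (-1 - x2 - b)
        + pc p ^ (-1 - x1 - b) * pc p ^ (-1 - x2 - y)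
        - pc p ^ (-1 - a1 - y) + pc p ^ (-1 - a1 - b)
        - pc p ^ (-1 - a2 - y) + pc p ^ (-1 - a2 - b)
        + pc p ^ (-1 - a1 - y) * pc p ^ (-1 - a2 - y)
        - pc p ^ (-1 - a1 - y) * pc p ^ (-1 - a2 - b))) := by
  have hp := pc_ne p
  have e1 : pc p ^ (-1 - x1 - b) = pc p ^ (y - b) * pc p ^ (-1 - x1 - y) := by
    rw [← cpow_add _ _ hp]; congr 1; ring
  have e2 : pc p ^ (-1 - x2 - b) = pc p ^ (y - b) * pc p ^ (-1 - x2 - y) := by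
    rw [← cpow_add _ _ hp]; congr 1; ring
  have e3 : pc p ^ (-2 - a1 - a2 - 2 * y) = pc p ^ (-1 - a1 - y) * pc p ^ (-1 - a2 - y) := by
    rw [← cpow_add _ _ hp]; congr 1; ring
  have e4 : pc p ^ (-2 - a1 - a2 - y - b) = pc p ^ (-1 - a1 - y) * pc p ^ (-1 - a2 - b) := by
    rw [← cpow_add _ _ hp]; congr 1; ring
  unfold AzetaFactor
  have : (1 - pc p ^ (y - b) - pc p ^ (-1 - a1 - y) + pc p ^ (-1 - a1 - b)
      - pc p ^ (-1 - a2 - y) + pc p ^ (-1 - a2 - b)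
      + pc p ^ (-2 - a1 - a2 - 2 * y) - pc p ^ (-2 - a1 - a2 - y - b)
      + pc p ^ (y - b) * (1 - pc p ^ (-1 - x1 - y)) * (1 - pc p ^ (-1 - x2 - y))) =
      (1 + (- pc p ^ (-1 - x1 - b) - pc p ^ (-1 - x2 - b)
        + pc p ^ (-1 - x1 - b) * pc p ^ (-1 - x2 - y)
        - pc p ^ (-1 - a1 - y) + pc p ^ (-1 - a1 - b)
        - pc p ^ (-1 - a2 - y) + pc p ^ (-1 - a2 - b)
        + pc p ^ (-1 - a1 - y) * pc p ^ (-1 - a2 - y)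
        - pc p ^ (-1 - a1 - y) * pc p ^ (-1 - a2 - b))) := by
    rw [e3, e4, e1, e2]; ring
  rw [this, div_eq_mul_inv]
  simp only [mul_inv]

lemma pc_norm (p : Nat.Primes) (s : ℂ) : ‖pc p ^ s‖ = ((p : ℕ) : ℝ) ^ s.re := by
  unfold pc; exact norm_natCast_cpow_of_pos p.2.pos s

lemma pc_norm_le (p : Nat.Primes) (s : ℂ) (c : ℝ) (h : s.re ≤ -1 - c) :
    ‖pc p ^ s‖ ≤ ((p : ℕ) : ℝ) ^ (-1 - c) := by
  rw [pc_norm]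
  exact Real.rpow_le_rpow_of_exponent_le (by exact_mod_cast p.2.one_lt.le) h

lemma t_le (p : Nat.Primes) (c : ℝ) (hc : 0 ≤ c) : ((p : ℕ) : ℝ) ^ (-1 - c) ≤ 1 / 2 := by
  have h2 : (2 : ℝ) ≤ ((p : ℕ) : ℝ) := by exact_mod_cast p.2.two_le
  calc ((p : ℕ) : ℝ) ^ (-1 - c) ≤ ((p : ℕ) : ℝ) ^ (-1 : ℝ) :=
        Real.rpow_le_rpow_of_exponent_le (by linarith) (by linarith)
    _ = (((p : ℕ) : ℝ))⁻¹ := Real.rpow_neg_one _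
    _ ≤ 1 / 2 := by rw [one_div]; exact inv_anti₀ (by norm_num) h2

lemma one_sub_ne {X : ℂ} (h : ‖X‖ ≤ 1 / 2) : 1 - X ≠ 0 := by
  intro h0
  have : X = 1 := (sub_eq_zero.mp h0).symm
  rw [this] at h; norm_num at h

lemma inv_norm {X : ℂ} (h : ‖X‖ ≤ 1 / 2) : ‖(1 - X)⁻¹‖ ≤ 2 := by
  have h1 : 1 / 2 ≤ ‖1 - X‖ := by
    have := norm_sub_norm_le (1 : ℂ) X
    rw [norm_one] at this; linarith
  rw [norm_inv]
  calc ‖1 - X‖⁻¹ ≤ (1 / 2 : ℝ)⁻¹ := inv_anti₀ (by norm_num) h1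
    _ = 2 := by norm_num

lemma inv_near {X : ℂ} {t : ℝ} (ht : t ≤ 1 / 2) (h : ‖X‖ ≤ t) : ‖(1 - X)⁻¹ - 1‖ ≤ 2 * t := by
  have hn := one_sub_ne (h.trans ht)
  have : (1 - X)⁻¹ - 1 = X * (1 - X)⁻¹ := by field_simp; ring
  rw [this, norm_mul]
  have := inv_norm (h.trans ht)
  nlinarith [norm_nonneg X, norm_nonneg (1 - X)⁻¹]

lemma mul_near {z w : ℂ} {C C' t : ℝ} (hC : 0 ≤ C) (hC' : 0 ≤ C') (ht0 : 0 ≤ t) (ht : t ≤ 1)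
    (hz : ‖z - 1‖ ≤ C * t) (hw : ‖w - 1‖ ≤ C' * t) :
    ‖z * w - 1‖ ≤ (C + C' + C * C') * t := by
  have : z * w - 1 = (z - 1) + (w - 1) + (z - 1) * (w - 1) := by ring
  rw [this]
  have h1 : ‖(z - 1) * (w - 1)‖ ≤ C * t * (C' * t) := by
    rw [norm_mul]; exact mul_le_mul hz hw (norm_nonneg _) (by positivity)
  have h2 : C * t * (C' * t) ≤ C * C' * t := by
    have : 0 ≤ C * C' * t := by positivity
    nlinarith
  have := norm_add₃_le (a := z - 1) (b := w - 1) (c := (z - 1) * (w - 1))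
  linarith

lemma near_bound : ∃ C : ℝ, ∀ (t : ℝ) (V1 V2 X1 X2 U1 U2 W : ℂ), 0 ≤ t → t ≤ 1 / 2 →
    ‖V1‖ ≤ t → ‖V2‖ ≤ t → ‖X1‖ ≤ t → ‖X2‖ ≤ t → ‖U1‖ ≤ t → ‖U2‖ ≤ t → ‖W‖ ≤ 1 →
    ‖(1 - V1) * (1 - V2) * ((1 - X1)⁻¹ * (1 - X2)⁻¹ * (1 - U1)⁻¹ * (1 - U2)⁻¹) *
      (1 + (-X1 - X2 + X1 * W - U1 + V1 - U2 + V2 + U1 * U2 - U1 * V2)) - 1‖ ≤ C * t := by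
  refine ⟨3239, fun t V1 V2 X1 X2 U1 U2 W ht0 ht hV1 hV2 hX1 hX2 hU1 hU2 hW => ?_⟩
  have ht1 : t ≤ 1 := by linarith
  have v : ∀ V : ℂ, ‖V‖ ≤ t → ‖(1 - V) - 1‖ ≤ 1 * t := by
    intro V h; simpa using h
  have hI : ‖(1 + (-X1 - X2 + X1 * W - U1 + V1 - U2 + V2 + U1 * U2 - U1 * V2)) - 1‖ ≤ 9 * t := by
    rw [add_sub_cancel_left]
    have m : ∀ a b : ℂ, ‖a‖ ≤ t → ‖b‖ ≤ 1 → ‖a * b‖ ≤ t := by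
      intro a b ha hb
      rw [norm_mul]; nlinarith [norm_nonneg a, norm_nonneg b]
    have m1 := m X1 W hX1 hW
    have m2 := m U1 U2 hU1 (hU2.trans ht1)
    have m3 := m U1 V2 hU1 (hV2.trans ht1)
    have n1 := norm_sub_le (-X1 - X2 + X1 * W - U1 + V1 - U2 + V2 + U1 * U2) (U1 * V2)
    have n2 := norm_add_le (-X1 - X2 + X1 * W - U1 + V1 - U2 + V2) (U1 * U2)
    have n3 := norm_add_le (-X1 - X2 + X1 * W - U1 + V1 - U2) (V2)
    have n4 := norm_sub_le (-X1 - X2 + X1 * W - U1 + V1) (U2)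
    have n5 := norm_add_le (-X1 - X2 + X1 * W - U1) (V1)
    have n6 := norm_sub_le (-X1 - X2 + X1 * W) (U1)
    have n7 := norm_add_le (-X1 - X2) (X1 * W)
    have n8 := norm_sub_le (-X1) (X2)
    rw [norm_neg] at n8
    linarith
  have hv := mul_near (by norm_num) (by norm_num) ht0 ht1 (v V1 hV1) (v V2 hV2)
  have h1 := mul_near (by norm_num) (by norm_num) ht0 ht1 (inv_near ht hX1) (inv_near ht hX2)
  have h2 := mul_near (by norm_num) (by norm_num) ht0 ht1 h1 (inv_near ht hU1)
  have h3 := mul_near (by norm_num) (by norm_num) ht0 ht1 h2 (inv_near ht hU2)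
  have h4 := mul_near (by norm_num) (by norm_num) ht0 ht1 hv h3
  exact (mul_near (by norm_num) (by norm_num) ht0 ht1 h4 hI).trans (le_of_eq (by norm_num))

/-- The `y`-derivative of the local factor at `y = b`. -/
def gp (x1 x2 a1 a2 b : ℂ) (p : Nat.Primes) : ℂ :=
  Complex.log (pc p) * (- (pc p ^ (-1 - a1 - b) * (1 - pc p ^ (-1 - a1 - b))⁻¹)
    - pc p ^ (-1 - a2 - b) * (1 - pc p ^ (-1 - a2 - b))⁻¹
    + (- (pc p ^ (-1 - x1 - b) * pc p ^ (-1 - x2 - b)) + pc p ^ (-1 - a1 - b)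
      + pc p ^ (-1 - a2 - b) - pc p ^ (-1 - a1 - b) * pc p ^ (-1 - a2 - b)) *
      ((1 - pc p ^ (-1 - x1 - b))⁻¹ * (1 - pc p ^ (-1 - x2 - b))⁻¹))

lemma pow_deriv (p : Nat.Primes) (a y : ℂ) :
    HasDerivAt (fun y => pc p ^ (-1 - a - y)) (- (Complex.log (pc p) * pc p ^ (-1 - a - y))) y := by
  have h : HasDerivAt (fun y : ℂ => -1 - a - y) (-1) y := by
    simpa using (hasDerivAt_id y).const_sub (-1 - a)
  have := h.const_cpow (c := pc p) (Or.inl (pc_ne p))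
  convert this using 1; ring

lemma small (p : Nat.Primes) {x y : ℂ} (hx : 0 < x.re) (hy : 0 < y.re) :
    ‖pc p ^ (-1 - x - y)‖ ≤ 1 / 2 :=
  (pc_norm_le p _ 0 (by simp; linarith)).trans (t_le p 0 le_rfl)

lemma factor_diff {x1 x2 y a1 a2 b : ℂ} (ha1 : 0 < a1.re) (ha2 : 0 < a2.re)
    (hy : 0 < y.re) (p : Nat.Primes) :
    DifferentiableAt ℂ (fun y => AzetaFactor x1 x2 y a1 a2 b p) y := by
  simp only [factor_eq]
  have d : ∀ a, DifferentiableAt ℂ (fun y => pc p ^ (-1 - a - y)) y :=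
    fun a => (pow_deriv p a y).differentiableAt
  have i1 : DifferentiableAt ℂ (fun y => (1 - pc p ^ (-1 - a1 - y))⁻¹) y :=
    DifferentiableAt.fun_inv ((d a1).const_sub 1) (one_sub_ne (small p ha1 hy))
  have i2 : DifferentiableAt ℂ (fun y => (1 - pc p ^ (-1 - a2 - y))⁻¹) y :=
    DifferentiableAt.fun_inv ((d a2).const_sub 1) (one_sub_ne (small p ha2 hy))
  have d1 := d a1
  have d2 := d a2
  have d3 := d x2
  fun_prop

lemma factor_deriv {x1 x2 a1 a2 b : ℂ} (h1 : 0 < x1.re) (h2 : 0 < x2.re)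
    (ha1 : 0 < a1.re) (ha2 : 0 < a2.re) (hb : 0 < b.re) (p : Nat.Primes) :
    HasDerivAt (fun y => AzetaFactor x1 x2 y a1 a2 b p) (gp x1 x2 a1 a2 b p) b := by
  simp only [factor_eq]
  have n1 := one_sub_ne (small p h1 hb)
  have n2 := one_sub_ne (small p h2 hb)
  have m1 := one_sub_ne (small p ha1 hb)
  have m2 := one_sub_ne (small p ha2 hb)
  have u1 := pow_deriv p a1 b
  have u2 := pow_deriv p a2 b
  have w := pow_deriv p x2 b
  have i1 := (u1.const_sub 1).fun_inv m1
  have i2 := (u2.const_sub 1).fun_inv m2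
  have I := ((((((((w.const_mul (pc p ^ (-1 - x1 - b))).const_add
    (- pc p ^ (-1 - x1 - b) - pc p ^ (-1 - x2 - b))).fun_sub u1).add_const
    (pc p ^ (-1 - a1 - b))).fun_sub u2).add_const (pc p ^ (-1 - a2 - b))).fun_add
    (u1.fun_mul u2)).fun_sub (u1.mul_const (pc p ^ (-1 - a2 - b)))).const_add 1
  have K := ((i1.const_mul ((1 - pc p ^ (-1 - x1 - b))⁻¹ * (1 - pc p ^ (-1 - x2 - b))⁻¹)).fun_mul
    i2).const_mul ((1 - pc p ^ (-1 - a1 - b)) * (1 - pc p ^ (-1 - a2 - b)))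
  have := K.fun_mul I
  refine this.congr_deriv ?_
  unfold gp
  generalize pc p ^ (-1 - x1 - b) = X1 at *
  generalize pc p ^ (-1 - x2 - b) = X2 at *
  generalize pc p ^ (-1 - a1 - b) = V1 at *
  generalize pc p ^ (-1 - a2 - b) = V2 at *
  field_simp
  ring

lemma factor_one {x1 x2 a1 a2 b : ℂ} (h1 : 0 < x1.re) (h2 : 0 < x2.re)
    (ha1 : 0 < a1.re) (ha2 : 0 < a2.re) (hb : 0 < b.re) (p : Nat.Primes) :
    AzetaFactor x1 x2 b a1 a2 b p = 1 := by
  rw [factor_eq]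
  have n1 := one_sub_ne (small p h1 hb)
  have n2 := one_sub_ne (small p h2 hb)
  have m1 := one_sub_ne (small p ha1 hb)
  have m2 := one_sub_ne (small p ha2 hb)
  field_simp
  ring

lemma gp_bound {x1 x2 a1 a2 b : ℂ} {c : ℝ} (hc : 0 < c) (h1 : 0 < x1.re) (h2 : 0 < x2.re)
    (ha1 : c ≤ a1.re) (ha2 : c ≤ a2.re) (hb : c ≤ b.re) (p : Nat.Primes) :
    ‖gp x1 x2 a1 a2 b p‖ ≤ (20 / (c / 2)) * ((p : ℕ) : ℝ) ^ (-1 - c / 2) := by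
  have ht := t_le p c hc.le
  have ht0 : 0 ≤ ((p : ℕ) : ℝ) ^ (-1 - c) := by positivity
  have X1 := pc_norm_le p (-1 - x1 - b) c (by simp; linarith)
  have X2 := pc_norm_le p (-1 - x2 - b) c (by simp; linarith)
  have V1 := pc_norm_le p (-1 - a1 - b) c (by simp; linarith)
  have V2 := pc_norm_le p (-1 - a2 - b) c (by simp; linarith)
  have hp1 : (1 : ℝ) ≤ ((p : ℕ) : ℝ) := by exact_mod_cast p.2.one_lt.le
  have hL : ‖Complex.log (pc p)‖ ≤ ((p : ℕ) : ℝ) ^ (c / 2) / (c / 2) := by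
    have : Complex.log (pc p) = ((Real.log ((p : ℕ) : ℝ) : ℝ) : ℂ) := by
      unfold pc; rw [Complex.natCast_log]
    rw [this, norm_real, Real.norm_of_nonneg (Real.log_nonneg hp1)]
    exact Real.log_le_rpow_div (by linarith) (by linarith)
  have key : ((p : ℕ) : ℝ) ^ (-1 - c / 2) = ((p : ℕ) : ℝ) ^ (c / 2) * ((p : ℕ) : ℝ) ^ (-1 - c) := by
    rw [← Real.rpow_add (by linarith)]; congr 1; ring
  rw [key]
  unfold gp
  rw [norm_mul]
  have hB : ∀ (t : ℝ) (X1 X2 V1 V2 : ℂ), 0 ≤ t → t ≤ 1 / 2 → ‖X1‖ ≤ t → ‖X2‖ ≤ t → ‖V1‖ ≤ t →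
      ‖V2‖ ≤ t → ‖- (V1 * (1 - V1)⁻¹) - V2 * (1 - V2)⁻¹ + (- (X1 * X2) + V1 + V2 - V1 * V2) *
      ((1 - X1)⁻¹ * (1 - X2)⁻¹)‖ ≤ 20 * t := by
    intro t X1 X2 V1 V2 ht0 ht hX1 hX2 hV1 hV2
    have iV1 := inv_norm (hV1.trans ht)
    have iV2 := inv_norm (hV2.trans ht)
    have iX1 := inv_norm (hX1.trans ht)
    have iX2 := inv_norm (hX2.trans ht)
    have q1 : ‖V1 * (1 - V1)⁻¹‖ ≤ t * 2 := by
      rw [norm_mul]; exact mul_le_mul hV1 iV1 (norm_nonneg _) ht0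
    have q2 : ‖V2 * (1 - V2)⁻¹‖ ≤ t * 2 := by
      rw [norm_mul]; exact mul_le_mul hV2 iV2 (norm_nonneg _) ht0
    have q3 : ‖X1 * X2‖ ≤ t * (1 / 2) := by
      rw [norm_mul]; exact mul_le_mul hX1 (hX2.trans ht) (norm_nonneg _) ht0
    have q4 : ‖V1 * V2‖ ≤ t * (1 / 2) := by
      rw [norm_mul]; exact mul_le_mul hV1 (hV2.trans ht) (norm_nonneg _) ht0
    have q5 : ‖(1 - X1)⁻¹ * (1 - X2)⁻¹‖ ≤ 2 * 2 := by
      rw [norm_mul]; exact mul_le_mul iX1 iX2 (norm_nonneg _) (by norm_num)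
    have q6 : ‖- (X1 * X2) + V1 + V2 - V1 * V2‖ ≤ 3 * t := by
      have n1 := norm_sub_le (- (X1 * X2) + V1 + V2) (V1 * V2)
      have n2 := norm_add_le (- (X1 * X2) + V1) V2
      have n3 := norm_add_le (- (X1 * X2)) V1
      rw [norm_neg] at n3
      linarith
    have q7 : ‖(- (X1 * X2) + V1 + V2 - V1 * V2) * ((1 - X1)⁻¹ * (1 - X2)⁻¹)‖ ≤ 3 * t * (2 * 2) := by
      rw [norm_mul]; exact mul_le_mul q6 q5 (norm_nonneg _) (by linarith)
    have n1 := norm_add_le (- (V1 * (1 - V1)⁻¹) - V2 * (1 - V2)⁻¹)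
      ((- (X1 * X2) + V1 + V2 - V1 * V2) * ((1 - X1)⁻¹ * (1 - X2)⁻¹))
    have n2 := norm_sub_le (- (V1 * (1 - V1)⁻¹)) (V2 * (1 - V2)⁻¹)
    rw [norm_neg] at n2
    linarith
  have := mul_le_mul hL (hB _ _ _ _ _ ht0 ht X1 X2 V1 V2) (norm_nonneg _) (by positivity)
  refine this.trans (le_of_eq ?_)
  ring

lemma summ {c : ℝ} (hc : 0 < c) : Summable (fun p : Nat.Primes => ((p : ℕ) : ℝ) ^ (-1 - c)) :=
  Nat.Primes.summable_rpow.mpr (by linarith)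

lemma gp_diff {x1 x2 a1 a2 b : ℂ} (h2 : 0 < x2.re) (hb : 0 < b.re) (p : Nat.Primes) :
    DifferentiableAt ℂ (fun x2 => gp x1 x2 a1 a2 b p) x2 := by
  have e : ∀ x : ℂ, -1 - x - b = -1 - b - x := fun x => by ring
  have d : DifferentiableAt ℂ (fun x => pc p ^ (-1 - x - b)) x2 := by
    simp only [e]; exact (pow_deriv p b x2).differentiableAt
  have i : DifferentiableAt ℂ (fun x => (1 - pc p ^ (-1 - x - b))⁻¹) x2 :=
    DifferentiableAt.fun_inv (d.const_sub 1) (one_sub_ne (small p h2 hb))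
  unfold gp
  fun_prop

lemma isOpen_pos : IsOpen {z : ℂ | 0 < z.re} := isOpen_lt continuous_const continuous_re

lemma Azeta_one {x1 x2 a1 a2 b : ℂ} (h1 : 0 < x1.re) (h2 : 0 < x2.re)
    (ha1 : 0 < a1.re) (ha2 : 0 < a2.re) (hb : 0 < b.re) :
    Azeta x1 x2 b a1 a2 b = 1 := by
  unfold Azeta
  simp only [factor_one h1 h2 ha1 ha2 hb, tprod_one]

lemma Azeta_deriv {x1 x2 a1 a2 b : ℂ} {c : ℝ} (hc : 0 < c) (h1 : 0 < x1.re) (h2 : 0 < x2.re)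
    (ha1 : c ≤ a1.re) (ha2 : c ≤ a2.re) (hb : c ≤ b.re) :
    HasDerivAt (fun y => Azeta x1 x2 y a1 a2 b) (∑' p, gp x1 x2 a1 a2 b p) b := by
  have pa1 := hc.trans_le ha1
  have pa2 := hc.trans_le ha2
  have pb := hc.trans_le hb
  have hd : ∀ p, DifferentiableOn ℂ (fun y => AzetaFactor x1 x2 y a1 a2 b p) {z : ℂ | 0 < z.re} :=
    fun p y hy => (factor_diff pa1 pa2 hy p).differentiableWithinAt
  obtain ⟨C, hC⟩ := near_bound
  have hM : MultipliableLocallyUniformlyOn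
      (fun p y => 1 + (AzetaFactor x1 x2 y a1 a2 b p - 1)) {z : ℂ | 0 < z.re} := by
    refine Summable.multipliableLocallyUniformlyOn_one_add isOpen_pos
      ((summ hc).mul_left C) (Filter.Eventually.of_forall fun p y hy => ?_)
      fun p => ((hd p).sub_const 1).continuousOn
    have hy' : 0 < y.re := hy
    rw [factor_eq]
    refine hC _ _ _ _ _ _ _ _ (by positivity) (t_le p c hc.le) ?_ ?_ ?_ ?_ ?_ ?_ ?_
    iterate 6 exact pc_norm_le _ _ _ (by simp; linarith)
    exact (small p h2 hy').trans (by norm_num)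
  simp only [add_sub_cancel] at hM
  have hdiff : DifferentiableOn ℂ (fun y => Azeta x1 x2 y a1 a2 b) {z : ℂ | 0 < z.re} := by
    refine hM.hasProdLocallyUniformlyOn.differentiableOn
      (.of_forall fun _ ↦ by simpa [Finset.prod_fn] using
        DifferentiableOn.fun_finsetProd (fun p _ ↦ hd p)) isOpen_pos
  have hA := (hdiff.differentiableAt (isOpen_pos.mem_nhds pb)).hasDerivAt
  refine hA.congr_deriv ?_
  have hl : ∀ p, logDeriv (fun y => AzetaFactor x1 x2 y a1 a2 b p) b = gp x1 x2 a1 a2 b p := by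
    intro p
    rw [logDeriv_apply, (factor_deriv h1 h2 pa1 pa2 pb p).deriv, factor_one h1 h2 pa1 pa2 pb,
      div_one]
  have := logDeriv_tprod_eq_tsum isOpen_pos (x := b) pb
    (f := fun p y => AzetaFactor x1 x2 y a1 a2 b p)
    (fun p => by simp [factor_one h1 h2 pa1 pa2 pb]) hd
    (by
      simp only [hl]
      exact Summable.of_norm_bounded ((summ (half_pos hc)).mul_left _)
        (gp_bound hc h1 h2 ha1 ha2 hb)) hM
    (by simp [factor_one h1 h2 pa1 pa2 pb])
  simp only [hl] at this
  rw [← this, logDeriv_apply]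
  change _ = _ / Azeta x1 x2 b a1 a2 b
  rw [Azeta_one h1 h2 pa1 pa2 pb, div_one]
  rfl

lemma gsum_diff {x1 x2 a1 a2 b : ℂ} {c : ℝ} (hc : 0 < c) (h1 : 0 < x1.re) (h2 : 0 < x2.re)
    (ha1 : c ≤ a1.re) (ha2 : c ≤ a2.re) (hb : c ≤ b.re) :
    DifferentiableAt ℂ (fun x2 => ∑' p, gp x1 x2 a1 a2 b p) x2 :=
  (Complex.differentiableOn_tsum_of_summable_norm ((summ (half_pos hc)).mul_left _)
    (fun p x hx => (gp_diff hx (hc.trans_le hb) p).differentiableWithinAt) isOpen_pos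
    (fun p _ hx => gp_bound hc h1 hx ha1 ha2 hb p)).differentiableAt (isOpen_pos.mem_nhds h2)

lemma zeta_ne {x y : ℂ} (hx : 0 < x.re) (hy : 0 < y.re) : riemannZeta (1 + x + y) ≠ 0 :=
  riemannZeta_ne_zero_of_one_lt_re (by simp; linarith)

lemma ne_one {x y : ℂ} (hx : 0 < x.re) (hy : 0 < y.re) : 1 + x + y ≠ 1 := by
  intro h
  have := congrArg re h
  simp at this; linarith

lemma zeta_deriv {x y : ℂ} (hx : 0 < x.re) (hy : 0 < y.re) :
    HasDerivAt (fun y => riemannZeta (1 + x + y)) (deriv riemannZeta (1 + x + y)) y := by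
  have h := (differentiableAt_riemannZeta (ne_one hx hy)).hasDerivAt
  exact h.comp_const_add (1 + x) y

/-- logarithmic derivative of zeta at `1 + x + b` -/
def ld (b x : ℂ) : ℂ := deriv riemannZeta (1 + x + b) / riemannZeta (1 + x + b)

lemma ld_diff {x b : ℂ} (hx : 0 < x.re) (hb : 0 < b.re) : DifferentiableAt ℂ (ld b) x := by
  have hz : DifferentiableOn ℂ riemannZeta {(1 : ℂ)}ᶜ := fun s hs =>
    (differentiableAt_riemannZeta hs).differentiableWithinAt
  have hz' := (hz.deriv isOpen_compl_singleton).differentiableAt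
    (isOpen_compl_singleton.mem_nhds (ne_one hx hb))
  have hz0 := differentiableAt_riemannZeta (ne_one hx hb)
  have hl : DifferentiableAt ℂ (fun x : ℂ => 1 + x + b) x := by fun_prop
  unfold ld
  have k1 : DifferentiableAt ℂ (fun x : ℂ => deriv riemannZeta (1 + x + b)) x :=
    DifferentiableAt.comp x (g := deriv riemannZeta) hz' hl
  have k2 : DifferentiableAt ℂ (fun x : ℂ => riemannZeta (1 + x + b)) x :=
    DifferentiableAt.comp x (g := riemannZeta) hz0 hl
  exact DifferentiableAt.fun_div k1 k2 (zeta_ne hx hb)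

lemma Y_one {x1 x2 a1 a2 b : ℂ} (h1 : 0 < x1.re) (h2 : 0 < x2.re)
    (ha1 : 0 < a1.re) (ha2 : 0 < a2.re) (hb : 0 < b.re) : Yfactor x1 x2 b a1 a2 b = 1 := by
  have n1 := zeta_ne h1 hb
  have n2 := zeta_ne h2 hb
  have m1 := zeta_ne ha1 hb
  have m2 := zeta_ne ha2 hb
  unfold Yfactor
  field_simp

lemma Y_deriv {x1 x2 a1 a2 b : ℂ} (h1 : 0 < x1.re) (h2 : 0 < x2.re)
    (ha1 : 0 < a1.re) (ha2 : 0 < a2.re) (hb : 0 < b.re) :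
    HasDerivAt (fun y => Yfactor x1 x2 y a1 a2 b) (ld b x1 + ld b x2 - ld b a1 - ld b a2) b := by
  have n1 := zeta_ne h1 hb
  have n2 := zeta_ne h2 hb
  have m1 := zeta_ne ha1 hb
  have m2 := zeta_ne ha2 hb
  have N := (((zeta_deriv h1 hb).fun_mul (zeta_deriv h2 hb)).mul_const
    (riemannZeta (1 + a1 + b))).mul_const (riemannZeta (1 + a2 + b))
  have D := ((zeta_deriv ha1 hb).const_mul
    (riemannZeta (1 + x1 + b) * riemannZeta (1 + x2 + b))).fun_mul (zeta_deriv ha2 hb)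
  unfold Yfactor
  refine (N.fun_div D (by simp [*])).congr_deriv ?_
  unfold ld
  field_simp
  ring

theorem stmt_9 (a1 a2 b : ℂ)
    (h1 : 0 < a1.re) (h1' : a1.re < 1 / 8) (h2 : 0 < a2.re) (h2' : a2.re < 1 / 8)
    (h3 : 0 < b.re) (h3' : b.re < 1 / 8)
    (h4 : a1 + b ≠ 0) (h5 : a2 + b ≠ 0) (h6 : a1 - a2 ≠ 0) :
    deriv (fun x1 : ℂ =>
        deriv (fun x2 : ℂ => deriv (fun y : ℂ => Gfun x1 x2 y a1 a2 b) b) a2) a1 =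
      deriv (fun x1 : ℂ =>
        deriv (fun x2 : ℂ => deriv (fun y : ℂ => Azeta x1 x2 y a1 a2 b) b) a2) a1 := by
  obtain ⟨c, hc, c1, c2, c3⟩ : ∃ c : ℝ, 0 < c ∧ c ≤ a1.re ∧ c ≤ a2.re ∧ c ≤ b.re :=
    ⟨min a1.re (min a2.re b.re), by simp [h1, h2, h3], by simp, by simp, by simp⟩
  have key : ∀ x1 : ℂ, 0 < x1.re →
      deriv (fun x2 : ℂ => deriv (fun y : ℂ => Gfun x1 x2 y a1 a2 b) b) a2 =
      deriv (ld b) a2 + deriv (fun x2 : ℂ => deriv (fun y : ℂ => Azeta x1 x2 y a1 a2 b) b) a2 := by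
    intro x1 hx1
    have eA : (fun x2 : ℂ => deriv (fun y : ℂ => Azeta x1 x2 y a1 a2 b) b) =ᶠ[nhds a2]
        fun x2 => ∑' p, gp x1 x2 a1 a2 b p := by
      filter_upwards [isOpen_pos.mem_nhds h2] with x2 hx2
      exact (Azeta_deriv hc hx1 hx2 c1 c2 c3).deriv
    have eG : (fun x2 : ℂ => deriv (fun y : ℂ => Gfun x1 x2 y a1 a2 b) b) =ᶠ[nhds a2]
        fun x2 => (ld b x1 - ld b a1 - ld b a2) + (ld b x2 + ∑' p, gp x1 x2 a1 a2 b p) := by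
      filter_upwards [isOpen_pos.mem_nhds h2] with x2 hx2
      have := (Y_deriv hx1 hx2 h1 h2 h3).fun_mul (Azeta_deriv hc hx1 hx2 c1 c2 c3)
      rw [Azeta_one hx1 hx2 h1 h2 h3, Y_one hx1 hx2 h1 h2 h3] at this
      unfold Gfun
      rw [this.deriv]; ring
    rw [eA.deriv_eq, eG.deriv_eq, deriv_const_add]
    exact deriv_fun_add (ld_diff h2 h3) (gsum_diff hc hx1 h2 c1 c2 c3)
  have e : (fun x1 : ℂ =>
        deriv (fun x2 : ℂ => deriv (fun y : ℂ => Gfun x1 x2 y a1 a2 b) b) a2) =ᶠ[nhds a1]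
      fun x1 => deriv (ld b) a2 +
        deriv (fun x2 : ℂ => deriv (fun y : ℂ => Azeta x1 x2 y a1 a2 b) b) a2 := by
    filter_upwards [isOpen_pos.mem_nhds h1] with x1 hx1 using key x1 hx1
  rw [e.deriv_eq, deriv_const_add]

end
end

section
/- Let α, β be complex numbers with Re α > 0 and Re β > 0. Then e^{−α−β} ∫_{U(N)} (Λ_X'/Λ_X)(e^{−α}) · (Λ_{X*}'/Λ_{X*})(e^{−β}) dX = (z'/z)'(α+β) + e^{−N(α+β)} z(α+β) z(−α−β), where the integral is over the unitary group U(N) with Haar probability measure. -/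
open Complex Matrix MeasureTheory

noncomputable section

instance matrixMeasurableSpace (N : ℕ) : MeasurableSpace (Matrix (Fin N) (Fin N) ℂ) :=
  (inferInstance : MeasurableSpace (Fin N → Fin N → ℂ))

/-- The characteristic polynomial `Λ_X(s) = det(I − s X*)` of a unitary matrix `X`. -/
def Lam {N : ℕ} (X : Matrix.unitaryGroup (Fin N) ℂ) (s : ℂ) : ℂ :=
  Matrix.det ((1 : Matrix (Fin N) (Fin N) ℂ) - s • (X : Matrix (Fin N) (Fin N) ℂ)ᴴ)

/-- The characteristic polynomial of `X*`: `Λ_{X*}(s) = det(I − s X)`. -/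
def LamStar {N : ℕ} (X : Matrix.unitaryGroup (Fin N) ℂ) (s : ℂ) : ℂ :=
  Matrix.det ((1 : Matrix (Fin N) (Fin N) ℂ) - s • (X : Matrix (Fin N) (Fin N) ℂ))

/-- `z(x) = 1/(1 − e^{−x})`. -/
def zf (x : ℂ) : ℂ := (1 - Complex.exp (-x))⁻¹

/-- The logarithmic derivative `z'/z`. -/
def zl (x : ℂ) : ℂ := deriv zf x / zf x


section Alg
open Finset

variable {R : Type*} [CommRing R]

def pz (p : ℕ → R) (n : ℕ) : R := if n = 0 then 0 else p n

lemma coeff_theta (F : PowerSeries R) (n : ℕ) :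
    PowerSeries.coeff n (PowerSeries.X * PowerSeries.derivative R F) = n * PowerSeries.coeff n F := by
  cases n with
  | zero => simp
  | succ n =>
    rw [PowerSeries.coeff_succ_X_mul, PowerSeries.coeff_derivative]; push_cast; ring

lemma newt_theta (σ : R) (p g : ℕ → R)
    (hg : ∀ n : ℕ, (n : R) * g n = σ * ∑ x ∈ antidiagonal n, g x.1 * pz p x.2) :
    PowerSeries.X * PowerSeries.derivative R (PowerSeries.mk g) =
      PowerSeries.C σ * (PowerSeries.mk g * PowerSeries.mk (pz p)) := by
  ext n
  rw [coeff_theta, PowerSeries.coeff_C_mul, PowerSeries.coeff_mul]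
  simpa using hg n

lemma newt_algH [Algebra ℂ R] (p h e : ℕ → R)
    (hh : ∀ n : ℕ, (n : R) * h n = 1 * ∑ x ∈ antidiagonal n, h x.1 * pz p x.2)
    (he : ∀ n : ℕ, (n : R) * e n = (-1) * ∑ x ∈ antidiagonal n, e x.1 * pz p x.2)
    (h0 : h 0 = 1) (e0 : e 0 = 1) (k : ℕ) (hk : k ≠ 0) :
    ∑ x ∈ antidiagonal k, e x.1 * h x.2 = 0 ∧
    ∑ x ∈ antidiagonal k, (x.1 : R) * (e x.1 * h x.2) = - p k := by
  have tH := newt_theta 1 p h hh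
  have tE := newt_theta (-1) p e he
  have z : ∀ n : ℕ, n ≠ 0 → PowerSeries.coeff n (PowerSeries.mk e * PowerSeries.mk h) = 0 := by
    intro n hn
    have : PowerSeries.X * PowerSeries.derivative R (PowerSeries.mk e * PowerSeries.mk h) = 0 := by
      rw [Derivation.leibniz]
      simp only [smul_eq_mul, map_one, map_neg] at *
      linear_combination (PowerSeries.mk e) * tH + (PowerSeries.mk h) * tE
    have := congrArg (PowerSeries.coeff n) this
    rw [coeff_theta, map_zero] at this
    have h2 : (n : R) = algebraMap ℂ R n := by simp
    have h3 : algebraMap ℂ R (n:ℂ)⁻¹ * algebraMap ℂ R n = 1 := by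
      rw [← map_mul, inv_mul_cancel₀ (by exact_mod_cast hn), map_one]
    rw [h2] at this
    calc _ = algebraMap ℂ R (n:ℂ)⁻¹ * algebraMap ℂ R n * _ := by rw [h3, one_mul]
      _ = 0 := by rw [mul_assoc, this, mul_zero]
  have z1 : PowerSeries.mk e * PowerSeries.mk h = 1 := by
    ext n
    by_cases hn : n = 0
    · subst hn; simp [h0, e0]
    · rw [z n hn, PowerSeries.coeff_one, if_neg hn]
  refine ⟨by simpa [PowerSeries.coeff_mul] using z k hk, ?_⟩
  have : (PowerSeries.X * PowerSeries.derivative R (PowerSeries.mk e)) * PowerSeries.mk h = 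
     - PowerSeries.mk (pz p) := by
    rw [tE]
    simp only [map_neg, map_one]
    linear_combination (-PowerSeries.mk (pz p)) * z1
  have := congrArg (PowerSeries.coeff k) this
  rw [PowerSeries.coeff_mul] at this
  simp only [coeff_theta, PowerSeries.coeff_mk, map_neg] at this
  simpa [pz, hk, mul_assoc] using this

lemma newt_algA (σ : R) (hσ : σ * σ = 1) (p g : ℕ → R)
    (hg : ∀ n : ℕ, (n : R) * g n = σ * ∑ x ∈ antidiagonal n, g x.1 * pz p x.2) (b : ℕ) :
    ∑ x ∈ antidiagonal b, g x.1 * ∑ y ∈ antidiagonal x.2, p y.1 * pz p y.2 +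
      σ * ∑ x ∈ antidiagonal b, ∑ y ∈ antidiagonal x.1,
        g y.1 * (if y.2 = 0 then 0 else p (y.2 + x.2)) = b * (b + σ * p 0) * g b := by
  have h1 : ∑ x ∈ antidiagonal b, ∑ y ∈ antidiagonal x.1,
        g y.1 * (if y.2 = 0 then 0 else p (y.2 + x.2)) =
      ∑ x ∈ antidiagonal b, g x.1 * ((x.2 : R) * pz p x.2) := by
    have e1 : ∀ x ∈ antidiagonal b, g x.1 * ((x.2 : R) * pz p x.2) =
        ∑ y ∈ antidiagonal x.2, g x.1 * (if y.1 = 0 then 0 else p (y.1 + y.2)) := by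
      intro x _
      rw [← mul_sum]
      congr 1
      cases hx : x.2 with
      | zero => simp
      | succ n =>
        rw [Finset.Nat.sum_antidiagonal_succ]
        have : ∀ y ∈ antidiagonal n, (if y.1 + 1 = 0 then 0 else p (y.1 + 1 + y.2)) = p (n+1) := by
          intro y hy
          rw [HasAntidiagonal.mem_antidiagonal] at hy
          rw [if_neg (by omega)]; congr 1; omega
        rw [sum_congr rfl this]
        simp [pz]
    rw [sum_congr rfl e1, sum_sigma', sum_sigma']
    refine sum_nbij' (fun x => ⟨(x.2.1, x.2.2 + x.1.2), (x.2.2, x.1.2)⟩)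
      (fun x => ⟨(x.1.1 + x.2.1, x.2.2), (x.1.1, x.2.1)⟩) ?_ ?_ ?_ ?_ ?_
    · rintro ⟨⟨a, b⟩, ⟨c, d⟩⟩ h
      simp only [mem_sigma, HasAntidiagonal.mem_antidiagonal, and_true] at h ⊢
      omega
    · rintro ⟨⟨a, b⟩, ⟨c, d⟩⟩ h
      simp only [mem_sigma, HasAntidiagonal.mem_antidiagonal, and_true] at h ⊢
      omega
    · rintro ⟨⟨a, b⟩, ⟨c, d⟩⟩ h
      simp only [mem_sigma, HasAntidiagonal.mem_antidiagonal] at h ⊢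
      obtain ⟨-, rfl⟩ := h; rfl
    · rintro ⟨⟨a, b⟩, ⟨c, d⟩⟩ h
      simp only [mem_sigma, HasAntidiagonal.mem_antidiagonal] at h ⊢
      obtain ⟨-, rfl⟩ := h; rfl
    · rintro ⟨⟨a, b⟩, ⟨c, d⟩⟩ h
      rfl
  have h2 : ∀ j : ℕ, ∑ y ∈ antidiagonal j, p y.1 * pz p y.2 = 
      p 0 * pz p j + ∑ y ∈ antidiagonal j, pz p y.1 * pz p y.2 := by
    intro j
    cases j with
    | zero => simp [pz]
    | succ j =>
      rw [Finset.Nat.sum_antidiagonal_succ, Finset.Nat.sum_antidiagonal_succ]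
      simp [pz]
  rw [h1]
  simp_rw [h2]
  let G := PowerSeries.mk g
  let P := PowerSeries.mk (pz p)
  let tP := PowerSeries.mk (fun n => (n:R) * pz p n)
  have c1 : ∑ x ∈ antidiagonal b, g x.1 * ((x.2 : R) * pz p x.2) = PowerSeries.coeff b (G * tP) := by
    simp [PowerSeries.coeff_mul, G, tP]
  have c2 : ∑ x ∈ antidiagonal b, g x.1 * (p 0 * pz p x.2 + ∑ y ∈ antidiagonal x.2, pz p y.1 * pz p y.2) 
     = PowerSeries.coeff b (G * (PowerSeries.C (p 0) * P + P * P)) := by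
    rw [PowerSeries.coeff_mul]
    simp only [map_add, PowerSeries.coeff_C_mul, PowerSeries.coeff_mul (φ := P)]
    simp only [G, P, PowerSeries.coeff_mk]
  have dP : PowerSeries.X * PowerSeries.derivative R P = tP := by
    ext n
    rw [coeff_theta]; simp [P, tP]
  have dG : PowerSeries.X * PowerSeries.derivative R G = PowerSeries.C σ * (G * P) :=
    newt_theta σ p g hg
  have dGb : PowerSeries.coeff b (PowerSeries.X * PowerSeries.derivative R G) = b * g b := by
    rw [coeff_theta]; simp [G]
  have ddG : PowerSeries.coeff b (PowerSeries.X * PowerSeries.derivative R (PowerSeries.X * PowerSeries.derivative R G)) = b * (b * g b) := by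
    rw [coeff_theta, dGb]
  have hσ' : PowerSeries.C σ * PowerSeries.C σ = (1 : PowerSeries R) := by
    rw [← map_mul, hσ, map_one]
  have e3 : G * (PowerSeries.C (p 0) * P + P * P) + PowerSeries.C σ * (G * tP) =
      PowerSeries.X * PowerSeries.derivative R (PowerSeries.X * PowerSeries.derivative R G)
      + PowerSeries.C (σ * p 0) * (PowerSeries.X * PowerSeries.derivative R G) := by
    rw [dG, ← dP]
    have hC : PowerSeries.derivative R (PowerSeries.C σ) = 0 := by
      simpa using PowerSeries.derivative_C (R := R) σ
    rw [Derivation.leibniz, Derivation.leibniz, hC]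
    simp only [smul_eq_mul, mul_zero, add_zero, map_mul]
    linear_combination (-G * PowerSeries.C (p 0) * P - G * P * P) * hσ' - PowerSeries.C σ * P * dG
  have := congrArg (PowerSeries.coeff b) e3
  rw [map_add, map_add, PowerSeries.coeff_C_mul, PowerSeries.coeff_C_mul, ddG, dGb, ← c1, ← c2] at this
  rw [this]; ring

lemma newt_algS (p h e : ℕ → R)
    (hh : ∀ n : ℕ, (n : R) * h n = ∑ x ∈ antidiagonal n, h x.1 * pz p x.2)
    (he : ∀ n : ℕ, (n : R) * e n = -∑ x ∈ antidiagonal n, e x.1 * pz p x.2) (a b : ℕ) :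
    ∑ x ∈ antidiagonal (b+1), ∑ y ∈ antidiagonal a,
        e x.1 * h y.1 * (if y.2 = 0 then 0 else p (y.2 + x.2)) -
    ∑ x ∈ antidiagonal b, ∑ y ∈ antidiagonal (a+1),
        e x.1 * h y.1 * (if y.2 = 0 then 0 else p (y.2 + x.2)) = (a + (b+1)) * (h a * e (b+1)) := by
  have H := hh a
  have E := he (b+1)
  rw [Finset.Nat.sum_antidiagonal_succ'] at E ⊢
  simp only [Finset.Nat.sum_antidiagonal_succ']
  have key : ∀ x : ℕ × ℕ, ∑ y ∈ antidiagonal a, e x.1 * h y.1 * (if y.2 = 0 then 0 else p (y.2 + (x.2+1)))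
     = ∑ y ∈ antidiagonal a, e x.1 * h y.1 * p (y.2 + 1 + x.2) - e x.1 * h a * p (x.2 + 1) := by
    intro x
    cases a with
    | zero => simp [add_comm]
    | succ a =>
      simp only [Finset.Nat.sum_antidiagonal_succ']
      simp only [if_true, Nat.add_eq_zero_iff, one_ne_zero, and_false, if_false]
      simp only [add_assoc, add_left_comm, zero_add, add_comm]
      ring
  simp only [key, sum_sub_distrib]
  simp only [if_true, Nat.add_eq_zero_iff, one_ne_zero, and_false, if_false, pz, mul_zero, zero_add, add_zero] at E H ⊢
  have : ∑ y ∈ antidiagonal a, e (b + 1) * h y.1 * (if y.2 = 0 then 0 else p y.2) = e (b+1) * (a * h a) := by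
    rw [H, mul_sum]; simp only [mul_assoc]
  rw [this]
  have : ∑ x ∈ antidiagonal b, e x.1 * h a * p (x.2 + 1) = - h a * (((b + 1:ℕ):R) * e (b+1)) := by
    rw [E, neg_mul_neg, mul_sum]; exact sum_congr rfl fun _ _ => by ring
  rw [this]; push_cast; ring

end Alg

section Jac
open Finset

lemma deriv_prod_aux {S A ι : Type*} [DecidableEq ι] [CommRing S] [CommRing A] [Algebra S A] (D : Derivation S A A)
    (s : Finset ι) (f : ι → A) : D (∏ i ∈ s, f i) = ∑ i ∈ s, (∏ j ∈ s.erase i, f j) * D (f i) := by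
  induction s using Finset.induction_on with
  | empty => simp
  | insert a s ha ih =>
    rw [prod_insert ha, Derivation.leibniz, ih, sum_insert ha, erase_insert ha, smul_eq_mul, smul_eq_mul,
      mul_sum, add_comm]
    congr 1
    refine sum_congr rfl fun i hi => ?_
    rw [erase_insert_of_ne (by rintro rfl; exact ha hi), prod_insert (by simp [ha]), mul_assoc]

lemma jacobi_det {S A : Type*} [CommRing S] [CommRing A] [Algebra S A] (D : Derivation S A A) {N : ℕ}
    (M : Matrix (Fin N) (Fin N) A) : D M.det = (M.adjugate * M.map D).trace := by
  have h : ∀ i, (M.adjugate * M.map D) i i = (M.updateCol i (fun k => D (M k i))).det := by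
    intro i
    rw [← Matrix.cramer_apply, Matrix.cramer_eq_adjugate_mulVec]
    rfl
  simp only [Matrix.trace, Matrix.diag, h]
  simp only [Matrix.det_apply, map_sum]
  rw [sum_comm]
  refine sum_congr rfl fun τ _ => ?_
  rw [← smul_sum, D.map_smul_of_tower, deriv_prod_aux]
  congr 1
  refine sum_congr rfl fun i _ => ?_
  rw [← mul_prod_erase _ _ (mem_univ i)]
  simp only [Matrix.updateCol_self, smul_eq_mul]
  rw [mul_comm]
  congr 1
  refine prod_congr rfl fun j hj => ?_
  rw [Matrix.updateCol_ne (ne_of_mem_erase hj)]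

lemma jacobi_rev {R : Type*} [CommRing R] {N : ℕ} (M : Matrix (Fin N) (Fin N) R) :
    Polynomial.derivative M.charpolyRev =
      - ((1 - (Polynomial.X : Polynomial R) • M.map Polynomial.C).adjugate * M.map Polynomial.C).trace := by
  have := jacobi_det (Polynomial.derivative' (R := R)) (1 - (Polynomial.X : Polynomial R) • M.map Polynomial.C)
  rw [Matrix.charpolyRev]
  have e : (1 - (Polynomial.X : Polynomial R) • M.map Polynomial.C).map (Polynomial.derivative' (R := R)) =
      - M.map Polynomial.C := by
    ext1 i j
    by_cases h : i = j <;> simp [Matrix.one_apply, Polynomial.derivative', h]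
  rw [e, mul_neg, Matrix.trace_neg] at this
  exact this

lemma natDegree_rev {R : Type*} [CommRing R] {N : ℕ} (M : Matrix (Fin N) (Fin N) R) (n : ℕ) (h : N < n) :
    M.charpolyRev.coeff n = 0 := by
  nontriviality R
  rw [← Matrix.reverse_charpoly]
  apply Polynomial.coeff_eq_zero_of_natDegree_lt
  refine lt_of_le_of_lt (Polynomial.reverse_natDegree_le _) ?_
  simpa using h

lemma newton_rev {R : Type*} [CommRing R] {N : ℕ} (M : Matrix (Fin N) (Fin N) R) (n : ℕ) :
    (n : R) * M.charpolyRev.coeff n =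
      (-1) * ∑ x ∈ antidiagonal n, M.charpolyRev.coeff x.1 * pz (fun k => (M ^ k).trace) x.2 := by
  cases n with
  | zero => simp [pz]
  | succ n =>
  set Bp := (1 - (Polynomial.X : Polynomial R) • M.map Polynomial.C).adjugate with hB
  have hmul : Bp * (1 - (Polynomial.X : Polynomial R) • M.map Polynomial.C) = M.charpolyRev • 1 :=
    Matrix.adjugate_mul _
  let B : ℕ → Matrix (Fin N) (Fin N) R := fun k => Bp.map (fun q => q.coeff k)
  have hE : ∀ i j, Bp i j = Polynomial.X * (∑ l, Bp i l * Polynomial.C (M l j)) +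
      M.charpolyRev * Polynomial.C ((1 : Matrix (Fin N) (Fin N) R) i j) := by
    intro i j
    rw [Matrix.mul_sub, Matrix.mul_one, Matrix.mul_smul] at hmul
    have := congrArg (fun Z => Z i j) hmul
    simp only [mul_sub, mul_one, Matrix.mul_smul, Matrix.sub_apply, Matrix.smul_apply, Matrix.mul_apply,
      Matrix.map_apply, smul_eq_mul] at this
    have h1 : (1 : Matrix (Fin N) (Fin N) (Polynomial R)) i j = Polynomial.C ((1 : Matrix (Fin N) (Fin N) R) i j) := by
      by_cases h : i = j <;> simp [Matrix.one_apply, h]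
    rw [h1] at this
    linear_combination this
  have hB0 : B 0 = M.charpolyRev.coeff 0 • 1 := by
    ext i j
    have := congrArg (fun Z => Z.coeff 0) (hE i j)
    simpa [B, -map_sum, -Matrix.coeff_charpolyRev_eq_neg_trace] using this
  have hBs : ∀ k, B (k+1) = B k * M + M.charpolyRev.coeff (k+1) • 1 := by
    intro k
    ext i j
    have := congrArg (fun Z => Z.coeff (k+1)) (hE i j)
    simp only [Polynomial.coeff_add, Polynomial.coeff_X_mul, Polynomial.coeff_mul_C, Polynomial.finsetSum_coeff] at this
    simpa only [B, Matrix.map_apply, Matrix.add_apply, Matrix.mul_apply, Matrix.smul_apply, smul_eq_mul] using this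
  have hBk : ∀ k, B k = ∑ x ∈ antidiagonal k, M.charpolyRev.coeff x.1 • M ^ x.2 := by
    intro k
    induction k with
    | zero => simp [hB0]
    | succ k ih =>
      rw [hBs, ih, Finset.Nat.sum_antidiagonal_succ', sum_mul, add_comm]
      simp [pow_succ]
  have hd := congrArg (fun q => q.coeff n) (jacobi_rev M)
  simp only [Polynomial.coeff_derivative] at hd
  have ht : (Bp * M.map Polynomial.C).trace.coeff n = (B n * M).trace := by
    simp [Matrix.trace, Matrix.mul_apply, Polynomial.finsetSum_coeff, B]
  rw [← hB, Polynomial.coeff_neg, ht, hBk, sum_mul] at hd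
  rw [Finset.Nat.sum_antidiagonal_succ']
  simp only [pz, Matrix.trace_sum, smul_mul_assoc, Matrix.trace_smul, ← pow_succ, smul_eq_mul] at hd ⊢
  push_cast
  simp only [if_true, Nat.add_eq_zero_iff, one_ne_zero, and_false, if_false, mul_zero, zero_add]
  linear_combination hd

end Jac

section Grp
open Finset

abbrev UG (N : ℕ) := Matrix.unitaryGroup (Fin N) ℂ
abbrev CR (N : ℕ) := C(UG N, ℂ)

instance borelMat (N : ℕ) : BorelSpace (Matrix (Fin N) (Fin N) ℂ) :=
  (inferInstance : BorelSpace (Fin N → Fin N → ℂ))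

instance compactUG (N : ℕ) : CompactSpace (UG N) := by
  suffices h : IsCompact ((Matrix.unitaryGroup (Fin N) ℂ : Submonoid _) : Set (Matrix (Fin N) (Fin N) ℂ)) from
    isCompact_iff_compactSpace.mp h
  have hc : IsCompact (Set.univ.pi fun _ : Fin N => Set.univ.pi fun _ : Fin N => Metric.closedBall (0:ℂ) 1) :=
    isCompact_univ_pi fun _ => isCompact_univ_pi fun _ => isCompact_closedBall _ _
  refine IsCompact.of_isClosed_subset (X := Fin N → Fin N → ℂ) hc ?_ ?_
  · exact isClosed_unitary (R := Matrix (Fin N) (Fin N) ℂ)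
  · intro X hX
    simp only [Set.mem_univ_pi, mem_closedBall_zero_iff]
    intro i j
    exact entry_norm_bound_of_unitary hX i j

def XX (N : ℕ) : Matrix (Fin N) (Fin N) (CR N) := Matrix.of fun i j =>
  ⟨fun X => X.1 i j, Continuous.matrix_elem continuous_subtype_val i j⟩
def XS (N : ℕ) : Matrix (Fin N) (Fin N) (CR N) := Matrix.of fun i j =>
  ⟨fun X => star (X.1 j i), (Continuous.matrix_elem continuous_subtype_val j i).star⟩

def evh {N : ℕ} (X : UG N) : CR N →+* ℂ := (Pi.evalRingHom (fun _ => ℂ) X).comp ContinuousMap.coeFnRingHom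

@[simp] lemma evh_apply {N : ℕ} (X : UG N) (f : CR N) : evh X f = f X := rfl

lemma evh_XX {N : ℕ} (X : UG N) : (evh X).mapMatrix (XX N) = X.1 := rfl
lemma evh_XS {N : ℕ} (X : UG N) : (evh X).mapMatrix (XS N) = X.1ᴴ := rfl

lemma XX_mul_XS (N : ℕ) : XX N * XS N = 1 := by
  ext i j X
  have h : (evh X).mapMatrix (XX N * XS N) = (evh X).mapMatrix 1 := by
    rw [map_mul, evh_XX, evh_XS, map_one]
    exact Matrix.mem_unitaryGroup_iff.mp X.2
  exact congrFun (congrFun h i) j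

open scoped Matrix.Norms.Operator in
lemma exp_mem {N : ℕ} (A : Matrix (Fin N) (Fin N) ℂ) (hA : Aᴴ = -A) (s : ℝ) :
    NormedSpace.exp (s • A) ∈ Matrix.unitaryGroup (Fin N) ℂ := by
  rw [Matrix.mem_unitaryGroup_iff, Matrix.star_eq_conjTranspose, ← Matrix.exp_conjTranspose]
  rw [Matrix.conjTranspose_smul, hA, star_trivial, smul_neg, ← Matrix.exp_add_of_commute, add_neg_cancel, NormedSpace.exp_zero]
  exact (Commute.refl _).neg_right

def eA {N : ℕ} (A : Matrix (Fin N) (Fin N) ℂ) (hA : Aᴴ = -A) (s : ℝ) : UG N :=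
  ⟨NormedSpace.exp (s • A), exp_mem A hA s⟩

lemma eA_zero {N : ℕ} (A : Matrix (Fin N) (Fin N) ℂ) (hA : Aᴴ = -A) : eA A hA 0 = 1 := by
  apply Subtype.ext
  simp [eA, NormedSpace.exp_zero]

lemma eA_add {N : ℕ} (A : Matrix (Fin N) (Fin N) ℂ) (hA : Aᴴ = -A) (s t : ℝ) :
    eA A hA (s + t) = eA A hA s * eA A hA t := by
  apply Subtype.ext
  show NormedSpace.exp ((s+t) • A) = NormedSpace.exp (s • A) * NormedSpace.exp (t • A)
  rw [add_smul, Matrix.exp_add_of_commute]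
  exact ((Commute.refl A).smul_left s).smul_right t

open scoped Matrix.Norms.Operator in
lemma eA_deriv {N : ℕ} (A : Matrix (Fin N) (Fin N) ℂ) (hA : Aᴴ = -A) (i j : Fin N) :
    HasDerivAt (fun s : ℝ => (eA A hA s).1 i j) (A i j) 0 := by
  have h := hasDerivAt_exp_smul_const (𝕂 := ℝ) A 0
  rw [zero_smul, NormedSpace.exp_zero, one_mul] at h
  have h2 := (LinearMap.toContinuousLinearMap (Matrix.entryLinearMap ℝ ℂ i j)).hasFDerivAt.comp_hasDerivAt (0:ℝ) h
  exact h2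

def HasGrad {N : ℕ} (f : CR N) (K : Matrix (Fin N) (Fin N) (CR N)) : Prop :=
  ∀ (A : Matrix (Fin N) (Fin N) ℂ) (hA : Aᴴ = -A) (X : UG N),
    HasDerivAt (fun s : ℝ => f (eA A hA s * X)) ((A * (evh X).mapMatrix K).trace) 0

lemma HasGrad.add {N : ℕ} {f g : CR N} {K L} (hf : HasGrad f K) (hg : HasGrad g L) :
    HasGrad (f + g) (K + L) := by
  intro A hA X
  rw [map_add, mul_add, Matrix.trace_add]
  exact (hf A hA X).add (hg A hA X)

lemma HasGrad.mul {N : ℕ} {f g : CR N} {K L} (hf : HasGrad f K) (hg : HasGrad g L) :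
    HasGrad (f * g) (g • K + f • L) := by
  intro A hA X
  have := (hf A hA X).mul (hg A hA X)
  rw [eA_zero, one_mul] at this
  convert! this using 1
  have h : ∀ (a : CR N) (M : Matrix (Fin N) (Fin N) (CR N)), (evh X).mapMatrix (a • M) = a X • (evh X).mapMatrix M := by
    intro a M; ext i j; simp
  rw [map_add, h, h, mul_add, Matrix.trace_add, Matrix.mul_smul, Matrix.mul_smul, Matrix.trace_smul, Matrix.trace_smul,
    smul_eq_mul, smul_eq_mul]
  ring

lemma HasGrad.const {N : ℕ} (c : ℂ) : HasGrad (algebraMap ℂ (CR N) c) 0 := by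
  intro A hA X
  rw [map_zero, mul_zero, Matrix.trace_zero]
  exact hasDerivAt_const (0:ℝ) c

lemma HasGrad.smulc {N : ℕ} (c : ℂ) {f : CR N} {K} (hf : HasGrad f K) :
    HasGrad (algebraMap ℂ (CR N) c * f) (algebraMap ℂ (CR N) c • K) := by
  simpa using (HasGrad.const c).mul hf

lemma HasGrad.sum {N : ℕ} {ι : Type*} (s : Finset ι) {f : ι → CR N} {K : ι → _}
    (h : ∀ i ∈ s, HasGrad (f i) (K i)) : HasGrad (∑ i ∈ s, f i) (∑ i ∈ s, K i) := by
  classical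
  induction s using Finset.induction_on with
  | empty => simpa using HasGrad.const (N := N) 0
  | insert a s ha ih =>
    rw [sum_insert ha, sum_insert ha]
    exact (h a (mem_insert_self _ _)).add (ih fun i hi => h i (mem_insert_of_mem hi))

lemma HasGrad_XX {N : ℕ} (i j : Fin N) : HasGrad (XX N i j) (XX N * Matrix.single j i 1) := by
  intro A hA X
  have : HasDerivAt (fun s : ℝ => ∑ l, (eA A hA s).1 i l * X.1 l j) (∑ l, A i l * X.1 l j) 0 :=
    HasDerivAt.fun_sum fun l _ => (eA_deriv A hA i l).mul_const _
  convert! this using 1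
  rw [map_mul, evh_XX]
  have : (evh X).mapMatrix (Matrix.single j i 1) = Matrix.single j i 1 := by
    simp [RingHom.mapMatrix_apply, Matrix.map_single]
  rw [this, ← Matrix.mul_assoc, Matrix.trace_mul_single]
  simp [Matrix.mul_apply]

lemma HasGrad_XS {N : ℕ} (i j : Fin N) : HasGrad (XS N i j) (- (Matrix.single j i 1 * XS N)) := by
  intro A hA X
  have h1 : HasDerivAt (fun s : ℝ => ∑ l, (eA A hA s).1 j l * X.1 l i) (∑ l, A j l * X.1 l i) 0 :=
    HasDerivAt.fun_sum fun l _ => (eA_deriv A hA j l).mul_const _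
  have := h1.star
  convert! this using 1
  rw [map_neg, map_mul, evh_XS]
  have h2 : (evh X).mapMatrix (Matrix.single j i 1) = Matrix.single j i 1 := by
    simp [RingHom.mapMatrix_apply, Matrix.map_single]
  rw [h2, mul_neg, Matrix.trace_neg, ← Matrix.mul_assoc, Matrix.trace_mul_comm, ← Matrix.mul_assoc, Matrix.trace_mul_single]
  have h3 : ∀ l, star (A j l) = - A l j := fun l => congrFun (congrFun hA l) j
  simp only [star_sum, star_mul', h3]
  simp [Matrix.mul_apply, mul_comm]

lemma sum_single_left {R : Type*} [CommRing R] {N : ℕ} (M : Matrix (Fin N) (Fin N) R) (i j : Fin N) :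
    ∑ l, M l j • Matrix.single l i (1:R) = M * Matrix.single j i 1 := by
  ext a b
  rw [Matrix.sum_apply]
  by_cases h : i = b
  · subst h; simp [Matrix.single_apply]
  · rw [Matrix.mul_single_apply_of_ne _ _ _ _ _ (Ne.symm h)]; simp [Matrix.single_apply, h]

lemma sum_single_right {R : Type*} [CommRing R] {N : ℕ} (M : Matrix (Fin N) (Fin N) R) (i j : Fin N) :
    ∑ l, M i l • Matrix.single j l (1:R) = Matrix.single j i 1 * M := by
  ext a b
  rw [Matrix.sum_apply]
  by_cases h : j = a
  · subst h; simp [Matrix.single_apply]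
  · rw [Matrix.single_mul_apply_of_ne _ _ _ _ _ (Ne.symm h)]; simp [Matrix.single_apply, h]

lemma HasGrad_XX_pow {N : ℕ} (n : ℕ) (i j : Fin N) :
    HasGrad ((XX N ^ n) i j) (∑ m ∈ range n, XX N ^ (n - m) * Matrix.single j i 1 * XX N ^ m) := by
  induction n generalizing i j with
  | zero =>
    have : (XX N ^ 0) i j = algebraMap ℂ (CR N) ((1 : Matrix (Fin N) (Fin N) ℂ) i j) := by
      by_cases h : i = j <;> simp [Matrix.one_apply, h]
    rw [this]
    simpa using HasGrad.const (N := N) _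
  | succ n ih =>
    rw [pow_succ, Matrix.mul_apply]
    have := HasGrad.sum univ fun l (_ : l ∈ univ) => (ih i l).mul (HasGrad_XX l j)
    convert! this using 1
    rw [sum_add_distrib, sum_range_succ]
    congr 1
    · simp only [smul_sum]
      rw [sum_comm]
      refine sum_congr rfl fun m hm => ?_
      have hm' : n + 1 - m = (n - m) + 1 := by have := mem_range.mp hm; omega
      have hh : ∀ l, XX N l j • (XX N ^ (n - m) * Matrix.single l i (1 : CR N) * XX N ^ m)
          = XX N ^ (n - m) * (XX N l j • Matrix.single l i (1 : CR N)) * XX N ^ m := by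
        intro l; rw [Matrix.mul_smul, Matrix.smul_mul]
      simp only [hh]
      rw [← sum_mul, ← mul_sum, sum_single_left, hm', pow_succ]
      simp only [Matrix.mul_assoc]
    · simp only [← mul_smul_comm]
      rw [← mul_sum, sum_single_right]
      simp [Matrix.mul_assoc]

lemma HasGrad_XS_pow {N : ℕ} (n : ℕ) (i j : Fin N) :
    HasGrad ((XS N ^ n) i j) (-∑ m ∈ range n, XS N ^ m * Matrix.single j i 1 * XS N ^ (n - m)) := by
  induction n generalizing i j with
  | zero =>
    have : (XS N ^ 0) i j = algebraMap ℂ (CR N) ((1 : Matrix (Fin N) (Fin N) ℂ) i j) := by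
      by_cases h : i = j <;> simp [Matrix.one_apply, h]
    rw [this]
    simpa using HasGrad.const (N := N) _
  | succ n ih =>
    rw [pow_succ, Matrix.mul_apply]
    have := HasGrad.sum univ fun l (_ : l ∈ univ) => (ih i l).mul (HasGrad_XS l j)
    convert! this using 1
    rw [sum_add_distrib, sum_range_succ']
    simp only [smul_neg, sum_neg_distrib]
    rw [neg_add]
    congr 2
    · simp only [smul_sum]
      rw [sum_comm]
      refine sum_congr rfl fun m hm => ?_
      have hh : ∀ l, XS N l j • (XS N ^ m * Matrix.single l i (1 : CR N) * XS N ^ (n - m))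
          = XS N ^ m * (XS N l j • Matrix.single l i (1 : CR N)) * XS N ^ (n - m) := by
        intro l; rw [Matrix.mul_smul, Matrix.smul_mul]
      simp only [hh]
      rw [← sum_mul, ← mul_sum, sum_single_left, pow_succ, Nat.add_sub_add_right]
      simp only [Matrix.mul_assoc]
    · simp only [← smul_mul_assoc]
      rw [← sum_mul, sum_single_right]
      simp [Matrix.mul_assoc, pow_succ]

def pp (N : ℕ) (n : ℕ) : CR N := (XX N ^ n).trace
def qq (N : ℕ) (n : ℕ) : CR N := (XS N ^ n).trace

lemma sum_single_diag {R : Type*} [CommRing R] {N : ℕ} :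
    ∑ l : Fin N, Matrix.single l l (1:R) = 1 := by
  ext a b
  rw [Matrix.sum_apply]
  by_cases h : a = b
  · subst h; simp [Matrix.single_apply]
  · simp only [Matrix.single_apply, Matrix.one_apply, h, if_false]
    refine sum_eq_zero fun l _ => if_neg ?_
    rintro ⟨rfl, rfl⟩; exact h rfl

lemma HasGrad_pp {N : ℕ} (n : ℕ) : HasGrad (pp N n) ((n : CR N) • XX N ^ n) := by
  have := HasGrad.sum univ fun l (_ : l ∈ univ) => HasGrad_XX_pow (N := N) n l l
  convert! this using 1
  rw [sum_comm]
  have : ∀ m ∈ range n, ∑ l, XX N ^ (n - m) * Matrix.single l l 1 * XX N ^ m = XX N ^ n := by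
    intro m hm
    rw [← sum_mul, ← mul_sum, sum_single_diag, mul_one, ← pow_add, Nat.sub_add_cancel (mem_range.mp hm).le]
  rw [sum_congr rfl this, sum_const, card_range, Nat.cast_smul_eq_nsmul]

lemma HasGrad_qq {N : ℕ} (n : ℕ) : HasGrad (qq N n) (-((n : CR N) • XS N ^ n)) := by
  have := HasGrad.sum univ fun l (_ : l ∈ univ) => HasGrad_XS_pow (N := N) n l l
  convert! this using 1
  rw [sum_neg_distrib, sum_comm]
  have : ∀ m ∈ range n, ∑ l, XS N ^ m * Matrix.single l l 1 * XS N ^ (n - m) = XS N ^ n := by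
    intro m hm
    rw [← sum_mul, ← mul_sum, sum_single_diag, mul_one, ← pow_add, Nat.add_sub_cancel' (mem_range.mp hm).le]
  rw [sum_congr rfl this, sum_const, card_range, Nat.cast_smul_eq_nsmul]

end Grp

section Loop
open Finset

variable {N : ℕ} (μ : Measure (UG N)) [IsProbabilityMeasure μ]

instance borelUG (N : ℕ) : BorelSpace (UG N) := Subtype.borelSpace _

lemma integrable_CR (f : CR N) : Integrable (fun X => f X) μ := by
  obtain ⟨C, hC⟩ := (isCompact_range f.continuous).isBounded.exists_norm_le
  exact Integrable.of_bound f.continuous.aestronglyMeasurable C (Filter.Eventually.of_forall fun X => hC _ ⟨X, rfl⟩)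

def EE : CR N →ₗ[ℂ] ℂ where
  toFun f := ∫ X, f X ∂μ
  map_add' f g := integral_add (integrable_CR μ f) (integrable_CR μ g)
  map_smul' c f := integral_const_mul c _

lemma HasGrad.at {f : CR N} {K} (hf : HasGrad f K) (A : Matrix (Fin N) (Fin N) ℂ) (hA : Aᴴ = -A) (X : UG N) (s : ℝ) :
    HasDerivAt (fun s : ℝ => f (eA A hA s * X)) ((A * (evh (eA A hA s * X)).mapMatrix K).trace) s := by
  have h := hf A hA (eA A hA s * X)
  have h2 : HasDerivAt (fun t : ℝ => t - s) 1 s := (hasDerivAt_id s).sub_const s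
  have h3 : HasDerivAt (fun r : ℝ => f (eA A hA r * (eA A hA s * X))) ((A * (evh (eA A hA s * X)).mapMatrix K).trace) (s - s) := by
    rw [sub_self]; exact h
  have h4 := HasDerivAt.scomp (h := fun t : ℝ => t - s) s h3 h2
  rw [one_smul] at h4
  convert! h4 using 1
  funext t
  simp only [Function.comp]
  rw [← mul_assoc, ← eA_add, sub_add_cancel]

lemma loop0_skew (hHaar : ∀ A : UG N, MeasurePreserving (fun X => A * X) μ μ) {f : CR N} {K} (hf : HasGrad f K)
    (A : Matrix (Fin N) (Fin N) ℂ) (hA : Aᴴ = -A) :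
    ∑ i, ∑ j, A i j * EE μ (K j i) = 0 := by
  let G : CR N := ∑ i, ∑ j, algebraMap ℂ (CR N) (A i j) * K j i
  have hG : ∀ X, (A * (evh X).mapMatrix K).trace = G X := by
    intro X
    have : G X = evh X G := rfl
    rw [this]
    simp only [G, map_sum, map_mul, Matrix.trace, Matrix.diag, Matrix.mul_apply]
    rfl
  have hEG : EE μ G = ∑ i, ∑ j, A i j * EE μ (K j i) := by
    simp only [G, map_sum, ← Algebra.smul_def, map_smul, smul_eq_mul]
  rw [← hEG]
  obtain ⟨C, hC⟩ := (isCompact_range G.continuous).isBounded.exists_norm_le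
  have hd := hasDerivAt_integral_of_dominated_loc_of_deriv_le (μ := μ) (F := fun (s : ℝ) (X : UG N) => f (eA A hA s * X))
    (F' := fun s X => G (eA A hA s * X)) (x₀ := 0) (s := Set.univ) (bound := fun _ => C) Filter.univ_mem
    (Filter.Eventually.of_forall fun s => (f.continuous.comp (continuous_const.mul continuous_id)).aestronglyMeasurable)
    (integrable_CR μ ⟨fun X => f (eA A hA 0 * X), f.continuous.comp (continuous_const.mul continuous_id)⟩)
    ((G.continuous.comp (continuous_const.mul continuous_id)).aestronglyMeasurable)
    (Filter.Eventually.of_forall fun X s _ => hC _ ⟨_, rfl⟩)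
    (integrable_const _)
    (Filter.Eventually.of_forall fun X s _ => by
      have := hf.at A hA X s
      rw [hG] at this
      exact this)
  have h1 := hd.2
  have hconst : (fun s : ℝ => ∫ X, f (eA A hA s * X) ∂μ) = fun _ => ∫ X, f X ∂μ := by
    funext s
    exact (hHaar (eA A hA s)).integral_comp (Homeomorph.mulLeft (eA A hA s)).measurableEmbedding f
  rw [hconst] at h1
  have h2 := h1.unique (hasDerivAt_const (0:ℝ) _)
  rw [eA_zero] at h2
  simpa [EE] using h2

lemma loop0 (hHaar : ∀ A : UG N, MeasurePreserving (fun X => A * X) μ μ) {f : CR N} {K} (hf : HasGrad f K)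
    (i j : Fin N) : EE μ (K i j) = 0 := by
  have hlin : ∀ A : Matrix (Fin N) (Fin N) ℂ, ∑ i, ∑ j, A i j * EE μ (K j i) = 0 := by
    intro A
    have h1 := loop0_skew μ hHaar hf (A - Aᴴ) (by simp)
    have h2 := loop0_skew μ hHaar hf (Complex.I • (A + Aᴴ)) (by
      rw [conjTranspose_smul]; simp [add_comm])
    simp only [Matrix.sub_apply, Matrix.smul_apply, Matrix.add_apply, smul_eq_mul, sub_mul, mul_add, add_mul,
      sum_add_distrib, sum_sub_distrib, mul_assoc, ← mul_sum] at h1 h2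
    have hI := Complex.I_ne_zero
    have h3 := mul_left_cancel₀ hI (((mul_add _ _ _).trans h2).trans (mul_zero Complex.I).symm)
    linear_combination (1/2) * h1 + (1/2) * h3
  have := hlin (Matrix.single j i 1)
  rw [sum_eq_single j, sum_eq_single i] at this
  · simpa using this
  · intro b _ hb; simp [Matrix.single_apply, hb.symm]
  · simp
  · intro b _ hb; simp [Matrix.single_apply, hb.symm]
  · simp

lemma loop1 (hHaar : ∀ A : UG N, MeasurePreserving (fun X => A * X) μ μ) {f : CR N} {K} (hf : HasGrad f K) (n : ℕ) :
    EE μ (f * ∑ y ∈ antidiagonal n, pp N y.1 * pz (pp N) y.2 + (XX N ^ n * K).trace) = 0 := by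
  have h : ∀ i j, EE μ (((XX N ^ n) i j • K + f • ∑ m ∈ range n, XX N ^ (n - m) * Matrix.single j i 1 * XX N ^ m) j i) = 0 :=
    fun i j => loop0 μ hHaar (hf.mul (HasGrad_XX_pow n i j)) j i
  have h2 : EE μ (∑ i, ∑ j, (((XX N ^ n) i j • K + f • ∑ m ∈ range n, XX N ^ (n - m) * Matrix.single j i 1 * XX N ^ m) j i)) = 0 := by
    simp only [map_sum, h, sum_const_zero]
  rw [← h2]
  congr 1
  simp only [Matrix.add_apply, Matrix.smul_apply, sum_add_distrib, smul_eq_mul]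
  rw [add_comm]
  congr 1
  simp only [← mul_sum]
  congr 1
  have h3 : ∀ m i j, (XX N ^ (n - m) * Matrix.single j i (1 : CR N) * XX N ^ m) j i = (XX N ^ (n-m)) j j * (XX N ^ m) i i := by
    intro m i j
    rw [Matrix.mul_assoc, Matrix.mul_apply, sum_eq_single j]
    · simp
    · intro b _ hb; rw [Matrix.single_mul_apply_of_ne _ _ _ _ _ hb, mul_zero]
    · simp
  simp only [Matrix.sum_apply, h3]
  have h4 : ∀ m, ∑ i, ∑ j, (XX N ^ (n-m)) j j * (XX N ^ m) i i = pp N m * pp N (n-m) := by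
    intro m
    simp only [pp, Matrix.trace, Matrix.diag, sum_mul_sum]
    exact sum_congr rfl fun i _ => sum_congr rfl fun j _ => mul_comm _ _
  rw [Nat.sum_antidiagonal_eq_sum_range_succ (fun a b => pp N a * pz (pp N) b), sum_range_succ]
  simp only [pz, Nat.sub_self, if_true, mul_zero, add_zero]
  calc _ = ∑ m ∈ range n, pp N m * pp N (n-m) := sum_congr rfl fun m hm => by
            rw [if_neg]; have := mem_range.mp hm; omega
    _ = ∑ m ∈ range n, ∑ i, ∑ j, (XX N ^ (n-m)) j j * (XX N ^ m) i i := sum_congr rfl fun m _ => (h4 m).symm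
    _ = _ := by
      rw [sum_comm]; exact sum_congr rfl fun i _ => by rw [sum_comm]

end Loop

section Gr
open Finset

variable {N : ℕ}

def XZ (N n : ℕ) : Matrix (Fin N) (Fin N) (CR N) := if n = 0 then 0 else XX N ^ n

def KK (σ : ℂ) (g : ℕ → CR N) (n : ℕ) : Matrix (Fin N) (Fin N) (CR N) :=
  algebraMap ℂ (CR N) σ • ∑ y ∈ antidiagonal n, g y.1 • XZ N y.2

lemma KK_theta (σ : ℂ) (g : ℕ → CR N)
    (hg : ∀ n : ℕ, (n : CR N) * g n = algebraMap ℂ (CR N) σ * ∑ x ∈ antidiagonal n, g x.1 * pz (pp N) x.2) (n : ℕ) :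
    algebraMap ℂ (CR N) σ • ∑ x ∈ antidiagonal n, (pz (pp N) x.2 • KK σ g x.1 + g x.1 • ((x.2 : CR N) • XZ N x.2))
      = (n : CR N) • KK σ g n := by
  ext1 i j
  have t := newt_theta _ (pp N) g hg
  set G := PowerSeries.mk g
  set P := PowerSeries.mk (pz (pp N))
  set Z := PowerSeries.mk (fun n => XZ N n i j) with hZ
  have hK : ∀ n, KK σ g n i j = PowerSeries.coeff n (PowerSeries.C (algebraMap ℂ (CR N) σ) * (G * Z)) := by
    intro n
    rw [PowerSeries.coeff_C_mul, PowerSeries.coeff_mul]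
    simp [KK, Matrix.sum_apply, G, Z]
  have e : PowerSeries.X * PowerSeries.derivative (CR N) (PowerSeries.C (algebraMap ℂ (CR N) σ) * (G * Z)) =
     PowerSeries.C (algebraMap ℂ (CR N) σ) * (PowerSeries.C (algebraMap ℂ (CR N) σ) * (G * Z) * P + G * (PowerSeries.X * PowerSeries.derivative (CR N) Z)) := by
    rw [Derivation.leibniz, Derivation.leibniz]
    simp only [smul_eq_mul, PowerSeries.derivative_C]
    linear_combination (PowerSeries.C (algebraMap ℂ (CR N) σ) * Z) * t
  have := congrArg (PowerSeries.coeff n) e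
  rw [coeff_theta, ← hK, PowerSeries.coeff_C_mul, map_add, PowerSeries.coeff_mul, PowerSeries.coeff_mul] at this
  simp only [← hK, coeff_theta] at this
  simp only [Matrix.smul_apply, Matrix.sum_apply, Matrix.add_apply, smul_eq_mul]
  rw [this, ← sum_add_distrib]
  congr 1
  refine sum_congr rfl fun x _ => ?_
  simp only [P, G, Z, PowerSeries.coeff_mk]
  ring

lemma grad_g (σ : ℂ) (g : ℕ → CR N)
    (hg : ∀ n : ℕ, (n : CR N) * g n = algebraMap ℂ (CR N) σ * ∑ x ∈ antidiagonal n, g x.1 * pz (pp N) x.2)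
    (g0 : g 0 = 1) (n : ℕ) : HasGrad (g n) (KK σ g n) := by
  induction n using Nat.strong_induction_on with
  | _ n ih =>
  by_cases hn : n = 0
  · subst hn
    simpa [KK, XZ, g0] using HasGrad.const (N := N) 1
  · have h1 : HasGrad (algebraMap ℂ (CR N) σ * ∑ x ∈ antidiagonal n, g x.1 * pz (pp N) x.2)
      (algebraMap ℂ (CR N) σ • ∑ x ∈ antidiagonal n, (pz (pp N) x.2 • KK σ g x.1 + g x.1 • ((x.2 : CR N) • XZ N x.2))) := by
      refine HasGrad.smulc _ (HasGrad.sum _ fun x hx => ?_)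
      have hx := HasAntidiagonal.mem_antidiagonal.mp hx
      by_cases h2 : x.2 = 0
      · simpa [h2, pz, XZ] using HasGrad.const (N := N) 0
      · have := (ih x.1 (by omega)).mul (HasGrad_pp (N := N) x.2)
        simpa [pz, XZ, h2] using this
    rw [KK_theta σ g hg, ← hg] at h1
    have h2 := HasGrad.smulc (n:ℂ)⁻¹ h1
    have h3 : algebraMap ℂ (CR N) (n:ℂ)⁻¹ * (n : CR N) = 1 := by
      have : (n : CR N) = algebraMap ℂ (CR N) n := by simp
      rw [this, ← map_mul, inv_mul_cancel₀ (by exact_mod_cast hn), map_one]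
    rw [← mul_assoc, h3, one_mul, smul_smul, h3, one_smul] at h2
    exact h2

lemma trace_KK (σ : ℂ) (g : ℕ → CR N) (n j : ℕ) : (XX N ^ j * KK σ g n).trace =
    algebraMap ℂ (CR N) σ * ∑ y ∈ antidiagonal n, g y.1 * (if y.2 = 0 then 0 else pp N (y.2 + j)) := by
  rw [KK, Matrix.mul_smul, Matrix.trace_smul, mul_sum, Matrix.trace_sum, smul_eq_mul]
  congr 1
  refine sum_congr rfl fun y _ => ?_
  rw [Matrix.mul_smul, Matrix.trace_smul, smul_eq_mul]
  congr 1
  by_cases h : y.2 = 0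
  · simp [h, XZ]
  · simp [h, XZ, pp, ← pow_add, add_comm]

lemma pp_zero : pp N 0 = (N : CR N) := by simp [pp]
lemma qq_zero : qq N 0 = (N : CR N) := by simp [qq]

lemma loop2 (μ : Measure (UG N)) [IsProbabilityMeasure μ]
    (hHaar : ∀ A : UG N, MeasurePreserving (fun X => A * X) μ μ) (σ : ℂ) (hσ : σ * σ = 1) (g : ℕ → CR N)
    (hg : ∀ n : ℕ, (n : CR N) * g n = algebraMap ℂ (CR N) σ * ∑ x ∈ antidiagonal n, g x.1 * pz (pp N) x.2)
    (g0 : g 0 = 1) (b : ℕ) {F : CR N} {K} (hF : HasGrad F K) :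
    EE μ ((b : CR N) * (b + algebraMap ℂ (CR N) σ * N) * g b * F +
      ∑ x ∈ antidiagonal b, g x.1 * (XX N ^ x.2 * K).trace) = 0 := by
  have h1 := fun x : ℕ × ℕ => loop1 μ hHaar ((grad_g σ g hg g0 x.1).mul hF) x.2
  have h2 : EE μ (∑ x ∈ antidiagonal b, (g x.1 * F * ∑ y ∈ antidiagonal x.2, pp N y.1 * pz (pp N) y.2 +
      (XX N ^ x.2 * (F • KK σ g x.1 + g x.1 • K)).trace)) = 0 := by
    rw [map_sum]; exact sum_eq_zero fun x _ => h1 x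
  rw [← h2]
  congr 1
  have hA := newt_algA (algebraMap ℂ (CR N) σ) (by rw [← map_mul, hσ, map_one]) (pp N) g hg b
  rw [pp_zero] at hA
  rw [← hA]
  simp only [Matrix.mul_add, Matrix.mul_smul, Matrix.trace_add, Matrix.trace_smul, trace_KK, smul_eq_mul, sum_add_distrib]
  rw [← add_assoc]
  congr 1
  rw [add_mul, sum_mul, mul_assoc, sum_mul, mul_sum]
  congr 1
  · exact sum_congr rfl fun x _ => by ring
  · exact sum_congr rfl fun x _ => by ring

lemma XX_XS_pow (j k : ℕ) (h : j ≤ k) : XX N ^ j * XS N ^ k = XS N ^ (k - j) := by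
  have h1 : XS N * XX N = 1 := mul_eq_one_comm.mp (XX_mul_XS N)
  have hc : Commute (XX N) (XS N) := (XX_mul_XS N).trans h1.symm
  obtain ⟨d, rfl⟩ := Nat.exists_eq_add_of_le h
  rw [pow_add, ← Matrix.mul_assoc, ← hc.mul_pow, XX_mul_XS, one_pow, one_mul, Nat.add_sub_cancel_left]

def ee (N n : ℕ) : CR N := (XX N).charpolyRev.coeff n

lemma ee_rec (n : ℕ) : (n : CR N) * ee N n = (-1) * ∑ x ∈ antidiagonal n, ee N x.1 * pz (pp N) x.2 := newton_rev (XX N) n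
lemma ee_zero : ee N 0 = 1 := by
  rw [ee, Polynomial.coeff_zero_eq_eval_zero, Matrix.eval_charpolyRev]

def hh (N : ℕ) : ℕ → CR N
  | 0 => 1
  | n+1 => algebraMap ℂ (CR N) ((n+1:ℕ):ℂ)⁻¹ * ∑ i : Fin (n+1), hh N i.1 * pp N (n + 1 - i.1)

lemma hh_zero : hh N 0 = 1 := by rw [hh]
lemma hh_rec (n : ℕ) : (n : CR N) * hh N n = 1 * ∑ x ∈ antidiagonal n, hh N x.1 * pz (pp N) x.2 := by
  cases n with
  | zero => simp [pz]
  | succ n =>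
    have h3 : ((n+1:ℕ) : CR N) * algebraMap ℂ (CR N) ((n+1:ℕ):ℂ)⁻¹ = 1 := by
      have : ((n+1:ℕ) : CR N) = algebraMap ℂ (CR N) ((n+1:ℕ):ℂ) := by simp
      rw [this, ← map_mul, mul_inv_cancel₀ (by exact_mod_cast Nat.succ_ne_zero n), map_one]
    rw [hh, ← mul_assoc, h3, Nat.sum_antidiagonal_eq_sum_range_succ (fun a b => hh N a * pz (pp N) b), sum_range_succ,
      ← Fin.sum_univ_eq_sum_range (fun a => hh N a * pz (pp N) (n+1-a))]
    simp only [pz, Nat.sub_self, if_true, mul_zero, add_zero]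
    congr 1
    refine sum_congr rfl fun i _ => ?_
    rw [if_neg]; omega

lemma num_lem (N : ℕ) (hN : 1 ≤ N) (c s : ℕ → ℕ → ℂ) (c0 : c 0 0 = N)
    (hI : ∀ k : ℕ, (k:ℂ) * (k + N) * c k 0 = k * ∑ x ∈ range (k+1), c x 0)
    (hII : ∀ a b : ℕ, (b:ℂ) * (b - N) * c a b + s a b = (a + b) * ∑ x ∈ range (b+1), c a x)
    (hS : ∀ a b : ℕ, s a (b+1) - s (a+1) b = (a + (b + 1)) * c a (b+1)) :
    (∀ k, 1 ≤ k → c k 0 = 1) ∧ ∀ b a, 1 ≤ b → 1 ≤ a → b < N → c a b = 0 := by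
  have h1 : ∀ k, 1 ≤ k → c k 0 = 1 := by
    intro k
    induction k using Nat.strong_induction_on with
    | _ k ih =>
    intro hk
    obtain ⟨k, rfl⟩ := Nat.exists_eq_add_of_le' hk
    have h := hI (k+1)
    rw [sum_range_succ, sum_range_succ', c0, sum_congr rfl (g := fun _ => (1:ℂ))
      (fun x hx => ih (x+1) (by have := mem_range.mp hx; omega) (by omega))] at h
    simp only [sum_const, card_range, nsmul_eq_mul, mul_one] at h
    have hk0 : ((k+1:ℕ):ℂ) ≠ 0 := by exact_mod_cast Nat.succ_ne_zero k
    rw [mul_assoc] at h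
    have h := mul_left_cancel₀ hk0 h
    have h2 : ((k+N:ℕ):ℂ) ≠ 0 := by exact_mod_cast (by omega)
    apply mul_left_cancel₀ h2
    push_cast at h ⊢
    linear_combination h
  refine ⟨h1, ?_⟩
  intro b
  induction b using Nat.strong_induction_on with
  | _ b ih =>
  intro a hb ha hbN
  obtain ⟨b, rfl⟩ := Nat.exists_eq_add_of_le' hb
  have hsum : ∀ a, 1 ≤ a → ∑ x ∈ range (b+1), c a x = 1 := by
    intro a ha
    rw [sum_range_succ', h1 a ha, sum_eq_zero, zero_add]
    intro x hx
    have := mem_range.mp hx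
    exact ih (x+1) (by omega) a (by omega) ha (by omega)
  have e1 := hII a (b+1)
  have e2 := hII (a+1) b
  have e3 := hS a b
  rw [sum_range_succ, hsum a ha] at e1
  rw [hsum (a+1) (by omega)] at e2
  have e4 : (b:ℂ) * c (a+1) b = 0 := by
    rcases Nat.eq_zero_or_pos b with h | h
    · simp [h]
    · rw [ih b (by omega) (a+1) h (by omega) (by omega), mul_zero]
  have h2 : ((b+1:ℕ):ℂ) * ((b+1:ℕ) - N) ≠ 0 := by
    refine mul_ne_zero (by exact_mod_cast Nat.succ_ne_zero b) (sub_ne_zero.mpr ?_)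
    exact_mod_cast hbN.ne
  apply mul_left_cancel₀ h2
  push_cast at *
  linear_combination e1 - e2 - e3 + (b - N) * e4

end Gr

section Mom
open Finset

variable {N : ℕ} (μ : Measure (UG N)) [IsProbabilityMeasure μ]
  (hHaar : ∀ A : UG N, MeasurePreserving (fun X => A * X) μ μ)

def cc (a b : ℕ) : ℂ := EE μ (hh N a * ee N b * qq N (a + b))
def ss (a b : ℕ) : ℂ := EE μ ((∑ x ∈ antidiagonal b, ∑ y ∈ antidiagonal a,
  ee N x.1 * hh N y.1 * (if y.2 = 0 then 0 else pp N (y.2 + x.2))) * qq N (a + b))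

lemma EE_const_mul (c : ℂ) (f : CR N) : EE μ (algebraMap ℂ (CR N) c * f) = c * EE μ f := by
  rw [← Algebra.smul_def, map_smul, smul_eq_mul]

lemma EE_nat_mul (n : ℕ) (f : CR N) : EE μ ((n : CR N) * f) = n * EE μ f := by
  rw [← EE_const_mul]; simp

lemma EE_one : EE μ 1 = 1 := by simp [EE]

lemma cc_zero : cc μ 0 0 = N := by
  rw [cc, hh_zero, ee_zero, add_zero, qq_zero, one_mul, mul_comm, EE_nat_mul, EE_one, mul_one]

include hHaar in
lemma cc_I (k : ℕ) : (k:ℂ) * (k + N) * cc μ k 0 = k * ∑ x ∈ range (k+1), cc μ x 0 := by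
  have h := loop2 μ hHaar 1 (by simp) (hh N) (by intro n; rw [map_one]; exact hh_rec n) hh_zero k (HasGrad_qq (N := N) k)
  have e : ∑ x ∈ antidiagonal k, hh N x.1 * (XX N ^ x.2 * -((k : CR N) • XS N ^ k)).trace =
      - ((k : CR N) * ∑ x ∈ antidiagonal k, hh N x.1 * ee N 0 * qq N (x.1 + 0)) := by
    rw [mul_sum, ← sum_neg_distrib]
    refine sum_congr rfl fun x hx => ?_
    have hx := HasAntidiagonal.mem_antidiagonal.mp hx
    rw [Matrix.mul_neg, Matrix.mul_smul, XX_XS_pow _ _ (by omega), Matrix.trace_neg, Matrix.trace_smul, ee_zero,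
      show k - x.2 = x.1 + 0 by omega, smul_eq_mul, qq]
    ring
  rw [e, map_one, map_add, map_neg, EE_nat_mul, map_sum] at h
  have e2 : (k : CR N) * (k + 1 * N) * hh N k * qq N k = (k : CR N) * (((k + N : ℕ) : CR N) * (hh N k * ee N 0 * qq N (k + 0))) := by
    rw [ee_zero]; push_cast; ring
  rw [e2, EE_nat_mul, EE_nat_mul] at h
  have e3 := Nat.sum_antidiagonal_eq_sum_range_succ (fun a _ => cc μ a 0) k
  simp only [cc] at e3 ⊢
  rw [← e3]
  push_cast at h
  linear_combination h

include hHaar in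
lemma cc_II (a b : ℕ) : (b:ℂ) * (b - N) * cc μ a b + ss μ a b = (a + b) * ∑ x ∈ range (b+1), cc μ a x := by
  have hF := (grad_g 1 (hh N) (by intro n; rw [map_one]; exact hh_rec n) hh_zero a).mul (HasGrad_qq (N := N) (a + b))
  have h := loop2 μ hHaar (-1) (by simp) (ee N) (by intro n; rw [map_neg, map_one]; exact ee_rec n) ee_zero b hF
  have e : ∑ x ∈ antidiagonal b, ee N x.1 * (XX N ^ x.2 * (qq N (a+b) • KK 1 (hh N) a + hh N a • -(((a+b : ℕ) : CR N) • XS N ^ (a+b)))).trace =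
      (∑ x ∈ antidiagonal b, ∑ y ∈ antidiagonal a,
        ee N x.1 * hh N y.1 * (if y.2 = 0 then 0 else pp N (y.2 + x.2))) * qq N (a + b)
      - (((a + b : ℕ) : CR N) * ∑ x ∈ antidiagonal b, hh N a * ee N x.1 * qq N (a + x.1)) := by
    rw [mul_sum, sum_mul, ← sum_sub_distrib]
    refine sum_congr rfl fun x hx => ?_
    have hx := HasAntidiagonal.mem_antidiagonal.mp hx
    rw [Matrix.mul_add, Matrix.mul_smul, Matrix.mul_smul, Matrix.mul_neg, Matrix.mul_smul, XX_XS_pow _ _ (by omega), Matrix.trace_add,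
      Matrix.trace_smul, Matrix.trace_smul, Matrix.trace_neg, Matrix.trace_smul, trace_KK, map_one,
      show a + b - x.2 = a + x.1 by omega]
    simp only [smul_eq_mul, qq, mul_assoc, ← mul_sum]
    ring
  rw [e, map_neg, map_one, map_add, map_sub, EE_nat_mul, map_sum] at h
  have e2 : (b : CR N) * (b + -1 * N) * ee N b * (hh N a * qq N (a + b)) =
     (b : CR N) * (b * (hh N a * ee N b * qq N (a+b)) - N * (hh N a * ee N b * qq N (a + b))) := by
    ring
  rw [e2, EE_nat_mul, map_sub, EE_nat_mul, EE_nat_mul] at h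
  have e3 := Nat.sum_antidiagonal_eq_sum_range_succ (fun i _ => cc μ a i) b
  simp only [cc, ss] at e3 ⊢
  rw [← e3]
  push_cast at h
  linear_combination h

lemma cc_S (a b : ℕ) : ss μ a (b+1) - ss μ (a+1) b = (a + (b + 1)) * cc μ a (b+1) := by
  have h := newt_algS (pp N) (hh N) (ee N) (fun n => by rw [hh_rec, one_mul]) (fun n => by rw [ee_rec]; ring) a b
  rw [ss, ss, cc, show a + 1 + b = a + (b+1) by ring, ← map_sub, ← sub_mul, h,
    show ((a : CR N) + (b + 1)) * (hh N a * ee N (b+1)) * qq N (a + (b+1)) =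
     ((a + (b+1) : ℕ) : CR N) * (hh N a * ee N (b+1) * qq N (a + (b+1))) by push_cast; ring, EE_nat_mul]
  push_cast; rfl

include hHaar in
lemma EE_diag (k : ℕ) (hk : 1 ≤ k) : EE μ (pp N k * qq N k) = (min k N : ℕ) := by
  rcases Nat.eq_zero_or_pos N with rfl | hN
  · have : pp 0 k = 0 := by simp [pp, Matrix.trace]
    simp [this]
  obtain ⟨h1, h2⟩ := num_lem N hN (cc μ) (ss μ) (cc_zero μ) (cc_I μ hHaar) (cc_II μ hHaar) (cc_S μ)
  have h3 : ∀ a b, N < b → cc μ a b = 0 := by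
    intro a b hb
    rw [cc, ee, natDegree_rev _ _ hb]; simp
  obtain ⟨z1, z2⟩ := newt_algH (pp N) (hh N) (ee N) hh_rec ee_rec hh_zero ee_zero k (by omega)
  have key : ∀ x ∈ antidiagonal k, EE μ (ee N x.1 * hh N x.2 * qq N k) = cc μ (k - x.1) x.1 := by
    intro x hx
    have hx := HasAntidiagonal.mem_antidiagonal.mp hx
    rw [cc, show k - x.1 = x.2 by omega, show x.2 + x.1 = k by omega, mul_comm (ee N x.1)]
  have w1 : ∑ b ∈ range (k+1), cc μ (k - b) b = 0 := by
    rw [← Nat.sum_antidiagonal_eq_sum_range_succ (fun b _ => cc μ (k - b) b) k, ← sum_congr rfl key, ← map_sum, ← sum_mul, z1]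
    simp
  have w2 : EE μ (pp N k * qq N k) = - ∑ b ∈ range (k+1), (b : ℂ) * cc μ (k - b) b := by
    rw [← Nat.sum_antidiagonal_eq_sum_range_succ (fun b _ => (b:ℂ) * cc μ (k - b) b) k,
      ← neg_neg (pp N k), ← z2, neg_mul, map_neg, sum_mul, map_sum]
    congr 1
    refine sum_congr rfl fun x hx => ?_
    rw [mul_assoc, EE_nat_mul, key x hx]
  have hm : ∀ b ∈ range (k+1), b ≠ 0 → b ≠ min k N → cc μ (k - b) b = 0 := by
    intro b hb h0 hm
    have := mem_range.mp hb
    rcases lt_or_ge N b with h | h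
    · exact h3 _ _ h
    · exact h2 b _ (by omega) (by omega) (by omega)
  have m1 : min k N ≠ 0 := by omega
  have mm : min k N ∉ range (k+1) → False := fun h => h (mem_range.mpr (by omega))
  have m0 : 0 ∉ range (k+1) → False := fun h => h (mem_range.mpr (by omega))
  rw [sum_eq_add (0:ℕ) (min k N) m1.symm (fun c hc h => hm c hc h.1 h.2) (fun h => (m0 h).elim) (fun h => (mm h).elim)] at w1
  rw [sum_eq_add (0:ℕ) (min k N) m1.symm (fun c hc h => by rw [hm c hc h.1 h.2, mul_zero]) (fun h => (m0 h).elim) (fun h => (mm h).elim)] at w2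
  rw [Nat.sub_zero, h1 k hk] at w1
  rw [w2]
  simp only [Nat.cast_zero, zero_mul, zero_add]
  linear_combination (-(min k N : ℕ) : ℂ) * w1

include hHaar in
lemma EE_off (j k : ℕ) (h : j ≠ k) : EE μ (pp N j * qq N k) = 0 := by
  have hg := (HasGrad_pp (N := N) j).mul (HasGrad_qq (N := N) k)
  have h0 := fun i => loop0 μ hHaar hg i i
  have h1 : EE μ ((qq N k • (j : CR N) • XX N ^ j + pp N j • -((k : CR N) • XS N ^ k)).trace) = 0 := by
    rw [Matrix.trace, map_sum]; exact sum_eq_zero fun i _ => h0 i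
  have e : (qq N k • (j : CR N) • XX N ^ j + pp N j • -((k : CR N) • XS N ^ k)).trace =
      (j : CR N) * (pp N j * qq N k) - (k : CR N) * (pp N j * qq N k) := by
    rw [Matrix.trace_add, Matrix.trace_smul, Matrix.trace_smul, Matrix.trace_smul, Matrix.trace_neg, Matrix.trace_smul]
    simp only [smul_eq_mul, pp, qq]
    ring
  rw [e, map_sub, EE_nat_mul, EE_nat_mul, ← sub_mul] at h1
  refine (mul_eq_zero.mp h1).resolve_left (sub_ne_zero.mpr ?_)
  exact_mod_cast h

end Mom

section Fin
open Finset

variable {N : ℕ}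

lemma mem_pow_bound (M : Matrix (Fin N) (Fin N) ℂ) (hM : M ∈ Matrix.unitaryGroup (Fin N) ℂ) (k : ℕ) (i j : Fin N) :
    ‖(M ^ k) i j‖ ≤ 1 := entry_norm_bound_of_unitary (pow_mem hM k) i j

lemma trace_bound (M : Matrix (Fin N) (Fin N) ℂ) (hM : M ∈ Matrix.unitaryGroup (Fin N) ℂ) (k : ℕ) :
    ‖(M ^ k).trace‖ ≤ N := by
  refine (norm_sum_le _ _).trans ((sum_le_sum fun i _ => mem_pow_bound M hM k i i).trans ?_)
  simp

lemma resolv (M : Matrix (Fin N) (Fin N) ℂ) (hM : M ∈ Matrix.unitaryGroup (Fin N) ℂ) (s : ℂ) (hs : ‖s‖ < 1) :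
    ∃ W : Matrix (Fin N) (Fin N) ℂ, HasSum (fun k : ℕ => s ^ k • M ^ k) W ∧ (1 - s • M) * W = 1 := by
  have hsum : ∀ i j, Summable fun k : ℕ => s ^ k * (M ^ k) i j := fun i j =>
    Summable.of_norm_bounded (summable_geometric_of_lt_one (norm_nonneg s) hs) fun k => by
      rw [norm_mul, norm_pow]
      exact mul_le_of_le_one_right (by positivity) (mem_pow_bound M hM k i j)
  let W : Matrix (Fin N) (Fin N) ℂ := Matrix.of fun i j => ∑' k, s ^ k * (M ^ k) i j
  have hW : HasSum (fun k : ℕ => s ^ k • M ^ k) W := by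
    refine Pi.hasSum.mpr fun i => Pi.hasSum.mpr fun j => ?_
    exact (hsum i j).hasSum
  refine ⟨W, hW, ?_⟩
  have h1 : HasSum (fun k : ℕ => s ^ (k+1) • M ^ (k+1)) ((s • M) * W) := by
    have := hW.mul_left (s • M)
    convert! this using 1
    funext k
    rw [Matrix.smul_mul, Matrix.mul_smul, smul_smul, ← pow_succ', ← pow_succ']
  have h2 := (hasSum_nat_add_iff' 1).mpr hW
  have h3 := h1.unique h2
  rw [sub_mul, one_mul, h3]
  simp

lemma logder (M : Matrix (Fin N) (Fin N) ℂ) (hM : M ∈ Matrix.unitaryGroup (Fin N) ℂ) (s : ℂ) (hs : ‖s‖ < 1) :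
    HasSum (fun k : ℕ => s ^ k * (M ^ (k+1)).trace)
     (-(deriv (fun z : ℂ => (1 - z • M).det) s / (1 - s • M).det)) := by
  obtain ⟨W, hW, hW1⟩ := resolv M hM s hs
  have hm : ∀ z : ℂ, (Polynomial.evalRingHom z).mapMatrix (1 - (Polynomial.X : Polynomial ℂ) • M.map Polynomial.C) = 1 - z • M := by
    intro z
    rw [map_sub, map_one]
    congr 1
    ext i j; simp; ring
  have hd : (fun z : ℂ => (1 - z • M).det) = fun z => M.charpolyRev.eval z := by
    funext z
    rw [← hm, ← RingHom.map_det]; rfl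
  have hder : deriv (fun z : ℂ => (1 - z • M).det) s = - ((1 - s • M).adjugate * M).trace := by
    rw [hd, Polynomial.deriv, jacobi_rev, Polynomial.eval_neg]
    congr 1
    have : ∀ A : Matrix (Fin N) (Fin N) (Polynomial ℂ), A.trace.eval s = ((Polynomial.evalRingHom s).mapMatrix A).trace := by
      intro A; simp [Matrix.trace, Polynomial.eval_finsetSum]
    rw [this, map_mul, ← hm, RingHom.map_adjugate]
    congr 2
    ext i j; simp
  have hadj : (1 - s • M).adjugate = (1 - s • M).det • W := by
    calc _ = (1 - s • M).adjugate * ((1 - s • M) * W) := by rw [hW1, mul_one]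
      _ = _ := by rw [← Matrix.mul_assoc, Matrix.adjugate_mul, Matrix.smul_mul, one_mul]
  have hne : (1 - s • M).det ≠ 0 := by
    intro h
    have := congrArg Matrix.det hW1
    rw [Matrix.det_mul, h, zero_mul, Matrix.det_one] at this
    exact zero_ne_one this
  rw [hder, hadj, Matrix.smul_mul, Matrix.trace_smul, neg_div, neg_neg, smul_eq_mul, mul_div_cancel_left₀ _ hne]
  have := (hW.mul_right M).map (Matrix.traceAddMonoidHom (Fin N) ℂ) (continuous_id.matrix_trace)
  convert! this using 1
  funext k
  simp [pow_succ, Matrix.trace_smul]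

lemma pp_apply (X : UG N) (k : ℕ) : pp N k X = (X.1 ^ k).trace := by
  have : pp N k X = ((evh X).mapMatrix (XX N ^ k)).trace := by
    have : ((evh X).mapMatrix (XX N ^ k)).trace = evh X (XX N ^ k).trace := by
      simp [Matrix.trace]
    rw [this]; rfl
  rw [this, map_pow, evh_XX]

lemma qq_apply (X : UG N) (k : ℕ) : qq N k X = (X.1ᴴ ^ k).trace := by
  have : qq N k X = ((evh X).mapMatrix (XS N ^ k)).trace := by
    have : ((evh X).mapMatrix (XS N ^ k)).trace = evh X (XS N ^ k).trace := by
      simp [Matrix.trace]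
    rw [this]; rfl
  rw [this, map_pow, evh_XS]

lemma star_mem_UG (X : UG N) : X.1ᴴ ∈ Matrix.unitaryGroup (Fin N) ℂ := Unitary.star_mem X.2

lemma sum_min (N : ℕ) (w : ℂ) (hw : ‖w‖ < 1) (hw1 : 1 - w ≠ 0) :
    HasSum (fun k : ℕ => w ^ k * ((min (k+1) N : ℕ) : ℂ)) ((1 - w ^ N) / (1 - w) ^ 2) := by
  induction N with
  | zero => simp
  | succ n ih =>
    have h1 : HasSum (fun k : ℕ => if n ≤ k then w ^ k else 0) (w ^ n / (1 - w)) := by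
      rw [← (add_left_injective n).hasSum_iff]
      · have := (hasSum_geometric_of_norm_lt_one hw).mul_left (w ^ n)
        rw [div_eq_mul_inv]
        convert! this using 1
        funext k
        simp [pow_add, mul_comm]
      · intro x hx
        rw [if_neg]
        intro h
        exact hx ⟨x - n, Nat.sub_add_cancel h⟩
    have h2 := ih.add h1
    convert! h2 using 1
    · funext k
      by_cases h : n ≤ k
      · rw [if_pos h, min_eq_right (by omega), min_eq_right (by omega)]; push_cast; ring
      · rw [if_neg h, min_eq_left (by omega), min_eq_left (by omega)]; ring
    · field_simp; ring

lemma main_int (μ : Measure (UG N)) [IsProbabilityMeasure μ]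
    (hHaar : ∀ A : UG N, MeasurePreserving (fun X => A * X) μ μ) (s t : ℂ) (hs : ‖s‖ < 1) (ht : ‖t‖ < 1) :
    ∫ X, (deriv (Lam X) s / Lam X s) * (deriv (LamStar X) t / LamStar X t) ∂μ = (1 - (s * t) ^ N) / (1 - s * t) ^ 2 := by
  have hw : ‖s * t‖ < 1 := by
    rw [norm_mul]; exact mul_lt_one_of_nonneg_of_lt_one_left (norm_nonneg _) hs ht.le
  have hw1 : 1 - s * t ≠ 0 := by
    intro h
    have : s * t = 1 := (sub_eq_zero.mp h).symm
    rw [this, norm_one] at hw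
    exact lt_irrefl _ hw
  let F : ℕ × ℕ → CR N := fun x => algebraMap ℂ (CR N) (s ^ x.1 * t ^ x.2) * (pp N (x.2 + 1) * qq N (x.1 + 1))
  have hFv : ∀ x X, F x X = (s ^ x.1 * (X.1ᴴ ^ (x.1 + 1)).trace) * (t ^ x.2 * (X.1 ^ (x.2 + 1)).trace) := by
    intro x X
    rw [← pp_apply, ← qq_apply]
    change s ^ x.1 * t ^ x.2 * (pp N (x.2 + 1) X * qq N (x.1 + 1) X) = _
    ring
  have gs := summable_geometric_of_lt_one (norm_nonneg s) hs
  have gt := summable_geometric_of_lt_one (norm_nonneg t) ht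
  have hbs : ∀ X : UG N, ∀ k, ‖s ^ k * (X.1ᴴ ^ (k+1)).trace‖ ≤ ‖s‖ ^ k * N := by
    intro X k
    rw [norm_mul, norm_pow]
    exact mul_le_mul_of_nonneg_left (trace_bound _ (star_mem_UG X) _) (by positivity)
  have hbt : ∀ X : UG N, ∀ k, ‖t ^ k * (X.1 ^ (k+1)).trace‖ ≤ ‖t‖ ^ k * N := by
    intro X k
    rw [norm_mul, norm_pow]
    exact mul_le_mul_of_nonneg_left (trace_bound _ X.2 _) (by positivity)
  have hint : ∀ X : UG N, (deriv (Lam X) s / Lam X s) * (deriv (LamStar X) t / LamStar X t) = ∑' x, F x X := by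
    intro X
    have h1 := logder X.1ᴴ (star_mem_UG X) s hs
    have h2 := logder X.1 X.2 t ht
    simp only [hFv]
    rw [← tsum_mul_tsum_of_summable_norm (Summable.of_nonneg_of_le (fun _ => norm_nonneg _) (hbs X) (gs.mul_right _))
      (Summable.of_nonneg_of_le (fun _ => norm_nonneg _) (hbt X) (gt.mul_right _)), h1.tsum_eq, h2.tsum_eq, neg_mul_neg]
    rfl
  have hFn : ∀ x X, ‖F x X‖ ≤ (‖s‖ ^ x.1 * N) * (‖t‖ ^ x.2 * N) := by
    intro x X
    rw [hFv, norm_mul]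
    exact mul_le_mul (hbs X _) (hbt X _) (norm_nonneg _) (by positivity)
  have hsum : Summable fun x => ∫ X, ‖F x X‖ ∂μ := by
    refine Summable.of_nonneg_of_le (fun x => integral_nonneg fun X => norm_nonneg _) (fun x => ?_)
      ((gs.mul_right (N:ℝ)).mul_of_nonneg (gt.mul_right (N:ℝ)) (fun k => by positivity) (fun k => by positivity))
    have := integral_mono (integrable_CR μ (F x)).norm (integrable_const _) (hFn x)
    simpa using this
  have hI := hasSum_integral_of_summable_integral_norm (fun x => integrable_CR μ (F x)) hsum
  simp only [← hint] at hI
  have hv : ∀ x, ∫ X, F x X ∂μ = s ^ x.1 * t ^ x.2 * EE μ (pp N (x.2 + 1) * qq N (x.1 + 1)) := fun x => EE_const_mul μ _ _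
  simp only [hv] at hI
  have hinj : Function.Injective (fun k : ℕ => (k, k)) := fun a b h => congrArg Prod.fst h
  rw [← hinj.hasSum_iff] at hI
  · refine hI.unique ?_
    convert! sum_min N (s * t) hw hw1 using 1
    funext k
    simp only [Function.comp]
    rw [EE_diag μ hHaar (k+1) (by omega), mul_pow]
  · rintro ⟨a, b⟩ hx
    rw [EE_off μ hHaar, mul_zero]
    intro h
    apply hx
    exact ⟨a, by simp at h; simp [h]⟩

lemma zl_eq : zl = fun y => - Complex.exp (-y) / (1 - Complex.exp (-y)) := by
  funext y
  by_cases h : 1 - Complex.exp (-y) = 0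
  · simp [zl, zf, h]
  · have h1 : HasDerivAt (fun y : ℂ => 1 - Complex.exp (-y)) (Complex.exp (-y)) y := by
      have := ((Complex.hasDerivAt_exp (-y)).comp y (hasDerivAt_neg y)).const_sub 1
      simpa using this
    have h2 : HasDerivAt zf _ y := h1.inv h
    rw [zl, h2.deriv, zf]
    field_simp

lemma deriv_zl (y : ℂ) (h : 1 - Complex.exp (-y) ≠ 0) :
    deriv zl y = Complex.exp (-y) / (1 - Complex.exp (-y)) ^ 2 := by
  have h0 : HasDerivAt (fun y : ℂ => Complex.exp (-y)) (-Complex.exp (-y)) y := by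
    have := ((Complex.hasDerivAt_exp (-y)).comp y (hasDerivAt_neg y))
    rw [mul_neg_one] at this
    exact this
  rw [zl_eq]
  have := (h0.neg.div (h0.const_sub 1) h)
  refine this.deriv.trans ?_
  simp only [Pi.neg_apply]
  congr 1
  ring

end Fin

/-- `e^{−α−β} ∫_{U(N)} (Λ_X'/Λ_X)(e^{−α}) (Λ_{X*}'/Λ_{X*})(e^{−β}) dX
      = (z'/z)'(α+β) + e^{−N(α+β)} z(α+β) z(−α−β)`. -/
theorem stmt_13 (N : ℕ) (μ : Measure (Matrix.unitaryGroup (Fin N) ℂ))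
    [IsProbabilityMeasure μ]
    (hHaar : ∀ A : Matrix.unitaryGroup (Fin N) ℂ,
      MeasurePreserving (fun X => A * X) μ μ)
    (α β : ℂ) (hα : 0 < α.re) (hβ : 0 < β.re) :
    Complex.exp (-α - β) *
        ∫ X, (deriv (Lam X) (Complex.exp (-α)) / Lam X (Complex.exp (-α))) *
          (deriv (LamStar X) (Complex.exp (-β)) / LamStar X (Complex.exp (-β))) ∂μ =
      deriv zl (α + β) +
        Complex.exp (-(N : ℂ) * (α + β)) * zf (α + β) * zf (-α - β) := by
  have hb : ∀ x : ℂ, 0 < x.re → ‖Complex.exp (-x)‖ < 1 := by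
    intro x hx
    rw [Complex.norm_exp, Complex.neg_re, Real.exp_lt_one_iff]
    linarith
  rw [main_int μ hHaar _ _ (hb α hα) (hb β hβ), ← Complex.exp_add]
  have e1 : -α + -β = -(α + β) := by ring
  have e2 : -α - β = -(α + β) := by ring
  have hab : 0 < (α + β).re := by rw [Complex.add_re]; linarith
  have hw := hb _ hab
  have hw1 : 1 - Complex.exp (-(α+β)) ≠ 0 := by
    intro h
    rw [← sub_eq_zero.mp h, norm_one] at hw
    exact lt_irrefl _ hw
  have e3 : Complex.exp (-(N : ℂ) * (α + β)) = Complex.exp (-(α+β)) ^ N := by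
    rw [← Complex.exp_nat_mul]; congr 1; ring
  rw [e1, e2, e3, deriv_zl _ hw1, zf, zf, Complex.exp_neg (-(α+β))]
  set w := Complex.exp (-(α+β)) with hwd
  have hw0 : w ≠ 0 := Complex.exp_ne_zero _
  have e4 : (1 - w⁻¹)⁻¹ = - w / (1 - w) := by
    have : 1 - w⁻¹ = -(1 - w) / w := by field_simp; ring
    rw [this, inv_div, div_neg, neg_div]
  rw [e4]
  field_simp
  ring

end
end

section
/- Let α, β be complex numbers with Re α > 0 and Re β > 0. Then the following averages over the unitary group U(N) with Haar probability measure all vanish: ∫_{U(N)} (Λ_X'/Λ_X)(e^{−α}) dX = 0, ∫_{U(N)} (Λ_{X*}'/Λ_{X*})(e^{−α}) dX = 0, and ∫_{U(N)} (Λ_X'/Λ_X)(e^{−α}) · (Λ_X'/Λ_X)(e^{−β}) dX = 0. -/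
open Complex Matrix MeasureTheory

noncomputable section

open scoped Matrix.Norms.L2Operator in
lemma neumann {N : ℕ} (M : Matrix (Fin N) (Fin N) ℂ) (hM : M ∈ Matrix.unitaryGroup (Fin N) ℂ)
    (s : ℂ) (hs : ‖s‖ < 1) :
    ∃ R : Matrix (Fin N) (Fin N) ℂ, (1 - s • M) * R = 1 ∧ HasSum (fun m : ℕ => (s • M) ^ m) R := by
  have h : ‖s • M‖ < 1 := by
    rcases subsingleton_or_nontrivial (Matrix (Fin N) (Fin N) ℂ) with h | h
    · rw [Subsingleton.elim (s • M) 0]; simp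
    · rw [norm_smul, CStarRing.norm_of_mem_unitary hM]; simpa
  have hh := summable_geometric_of_norm_lt_one h
  exact ⟨_, hh.one_sub_mul_tsum_pow, hh.hasSum⟩

lemma logDer {N : ℕ} (M : Matrix (Fin N) (Fin N) ℂ) (hM : M ∈ Matrix.unitaryGroup (Fin N) ℂ)
    (s : ℂ) (hs : ‖s‖ < 1) :
    HasSum (fun m : ℕ => -(s ^ m * (M ^ (m + 1)).trace))
      (deriv (fun s : ℂ => Matrix.det (1 - s • M)) s / Matrix.det (1 - s • M)) := by
  obtain ⟨R, hR, hsum⟩ := neumann M hM s hs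
  have hdet : Matrix.det (1 - s • M) ≠ 0 := by
    intro h
    have := congrArg Matrix.det hR
    simp [h] at this
  have hd : HasDerivAt (fun h : ℂ => Matrix.det (1 + h • (-(R * M)))) (-(R * M)).trace 0 := by
    generalize -(R * M) = A
    have := (Matrix.det (1 + (Polynomial.X : Polynomial ℂ) • A.map Polynomial.C)).hasDerivAt 0
    rw [Matrix.derivative_det_one_add_X_smul] at this
    refine this.congr_of_eventuallyEq (Filter.Eventually.of_forall fun h => ?_)
    simp [eval_det, ← Matrix.smul_eq_mul_diagonal]
  have hfun : (fun z : ℂ => Matrix.det (1 - z • M)) =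
      fun z => Matrix.det (1 - s • M) * Matrix.det (1 + (z - s) • (-(R * M))) := by
    funext z
    rw [← Matrix.det_mul, mul_add, Matrix.mul_smul, mul_neg, ← mul_assoc, hR]
    congr 1
    rw [mul_one, one_mul, smul_neg, sub_smul]
    abel
  have hder : HasDerivAt (fun z : ℂ => Matrix.det (1 - z • M))
      (Matrix.det (1 - s • M) * (-(R * M)).trace) s := by
    rw [hfun]
    refine HasDerivAt.const_mul _ ?_
    have h0 : HasDerivAt (fun h : ℂ => Matrix.det (1 + h • (-(R * M)))) (-(R * M)).trace (s - s) := by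
      simpa using hd
    exact h0.comp_sub_const s s
  rw [hder.deriv, mul_div_cancel_left₀ _ hdet]
  have h1 : HasSum (fun m : ℕ => -((s • M) ^ m * M).trace) (-(R * M).trace) :=
    ((hsum.mul_right M).map (Matrix.traceAddMonoidHom (Fin N) ℂ)
      (by exact Continuous.matrix_trace continuous_id)).neg
  rw [Matrix.trace_neg]
  convert h1 using 2 with m
  rw [smul_pow, smul_mul_assoc, Matrix.trace_smul, pow_succ, smul_eq_mul]

lemma trBound {N : ℕ} (M : Matrix (Fin N) (Fin N) ℂ) (hM : M ∈ Matrix.unitaryGroup (Fin N) ℂ)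
    (m : ℕ) : ‖(M ^ m).trace‖ ≤ N := by
  have h := pow_mem hM m
  calc ‖(M ^ m).trace‖ ≤ ∑ i : Fin N, ‖(M ^ m) i i‖ := norm_sum_le _ _
    _ ≤ ∑ i : Fin N, (1 : ℝ) := Finset.sum_le_sum fun i _ => entry_norm_bound_of_unitary h i i
    _ = N := by simp

lemma trMeas {N : ℕ} (m : ℕ) : Measurable
    (fun X : Matrix.unitaryGroup (Fin N) ℂ => ((X : Matrix (Fin N) (Fin N) ℂ) ^ m).trace) := by
  have h : ∀ i j, Measurable
    (fun X : Matrix.unitaryGroup (Fin N) ℂ => ((X : Matrix (Fin N) (Fin N) ℂ) ^ m) i j) := by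
    induction m with
    | zero => intro i j; simp only [pow_zero]; exact measurable_const
    | succ k ih =>
      intro i j
      simp only [pow_succ, Matrix.mul_apply]
      refine Finset.measurable_sum _ fun l _ => (ih i l).mul ?_
      exact (measurable_pi_apply j).comp ((measurable_pi_apply l).comp measurable_subtype_coe)
  exact Finset.measurable_sum _ fun l _ => h l l

lemma trConj {N : ℕ} (m : ℕ) (X : Matrix (Fin N) (Fin N) ℂ) :
    ((Xᴴ) ^ m).trace = star ((X ^ m).trace) := by
  rw [← Matrix.conjTranspose_pow, Matrix.trace_conjTranspose]

lemma trMeas' {N : ℕ} (m : ℕ) : Measurable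
    (fun X : Matrix.unitaryGroup (Fin N) ℂ => ((X : Matrix (Fin N) (Fin N) ℂ)ᴴ ^ m).trace) := by
  simp only [trConj]
  exact Complex.continuous_conj.measurable.comp (trMeas m)

/-- scalar unitary -/
def scal (N : ℕ) (t : ℝ) : Matrix.unitaryGroup (Fin N) ℂ :=
  ⟨Complex.exp (t * I) • 1, by
    rw [Matrix.mem_unitaryGroup_iff]
    simp only [star_smul, star_one, smul_mul_smul_comm, mul_one]
    rw [Complex.star_def, Complex.mul_conj, Complex.normSq_eq_norm_sq, Complex.norm_exp_ofReal_mul_I]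
    simp⟩

lemma key {N : ℕ} {ι : Type} [Countable ι] (μ : Measure (Matrix.unitaryGroup (Fin N) ℂ))
    [IsProbabilityMeasure μ]
    (hHaar : ∀ A : Matrix.unitaryGroup (Fin N) ℂ, MeasurePreserving (fun X => A * X) μ μ)
    (a : ι → Matrix.unitaryGroup (Fin N) ℂ → ℂ) (d : ι → ℤ) (hd : ∀ i, d i ≠ 0)
    (C : ι → ℝ) (hC : Summable C) (hb : ∀ i X, ‖a i X‖ ≤ C i) (hm : ∀ i, Measurable (a i))
    (hhom : ∀ i t X, a i (scal N t * X) = Complex.exp (t * I) ^ (d i) * a i X)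
    (F : Matrix.unitaryGroup (Fin N) ℂ → ℂ) (hF : ∀ X, HasSum (fun i => a i X) (F X)) :
    ∫ X, F X ∂μ = 0 := by
  have hint : ∀ i, Integrable (a i) μ := fun i =>
    Integrable.of_bound (hm i).aestronglyMeasurable (C i) (Filter.Eventually.of_forall (hb i))
  have hz : ∀ i, ∫ X, a i X ∂μ = 0 := by
    intro i
    set t : ℝ := Real.pi / d i
    have hdi : ((d i : ℤ) : ℂ) ≠ 0 := by exact_mod_cast hd i
    have hexp : Complex.exp (t * I) ^ (d i) = -1 := by
      rw [← Complex.exp_int_mul, ← Complex.exp_pi_mul_I]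
      congr 1
      simp only [t]; push_cast
      field_simp
    have h1 : ∫ X, a i (scal N t * X) ∂μ = ∫ X, a i X ∂μ := by
      have hp := hHaar (scal N t)
      conv_rhs => rw [← hp.map_eq]
      rw [integral_map hp.measurable.aemeasurable (hm i).aestronglyMeasurable]
    simp only [hhom, hexp, neg_one_mul, integral_neg] at h1
    have h2 : 2 * ∫ X, a i X ∂μ = 0 := by linear_combination -h1
    simpa using h2
  have hsum : Summable fun i => ∫ X, ‖a i X‖ ∂μ := by
    refine Summable.of_nonneg_of_le (fun i => integral_nonneg fun _ => norm_nonneg _) (fun i => ?_) hC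
    calc ∫ X, ‖a i X‖ ∂μ ≤ ∫ X, C i ∂μ :=
          integral_mono (hint i).norm (integrable_const _) (hb i)
      _ = C i := by simp
  have := hasSum_integral_of_summable_integral_norm hint hsum
  simp only [hz, fun X => (hF X).tsum_eq] at this
  exact (hasSum_zero.unique this).symm

lemma trScal {N : ℕ} (m : ℕ) (t : ℝ) (X : Matrix.unitaryGroup (Fin N) ℂ) :
    (((scal N t * X : Matrix.unitaryGroup (Fin N) ℂ) : Matrix (Fin N) (Fin N) ℂ) ^ m).trace
      = Complex.exp (t * I) ^ (m : ℤ) * ((X : Matrix (Fin N) (Fin N) ℂ) ^ m).trace := by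
  simp [scal, smul_pow, Matrix.trace_smul]

lemma trScal' {N : ℕ} (m : ℕ) (t : ℝ) (X : Matrix.unitaryGroup (Fin N) ℂ) :
    (((scal N t * X : Matrix.unitaryGroup (Fin N) ℂ) : Matrix (Fin N) (Fin N) ℂ)ᴴ ^ m).trace
      = Complex.exp (t * I) ^ (-(m : ℤ)) * ((X : Matrix (Fin N) (Fin N) ℂ)ᴴ ^ m).trace := by
  rw [trConj, trScal, trConj, star_mul', _root_.zpow_neg, zpow_natCast, star_pow, ← inv_pow]
  congr 2
  rw [← Complex.exp_neg, Complex.star_def, ← Complex.exp_conj]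
  simp

lemma conjMem {N : ℕ} (X : Matrix.unitaryGroup (Fin N) ℂ) :
    (X : Matrix (Fin N) (Fin N) ℂ)ᴴ ∈ Matrix.unitaryGroup (Fin N) ℂ := Unitary.star_mem X.2

lemma termBound {N : ℕ} (M : Matrix (Fin N) (Fin N) ℂ) (hM : M ∈ Matrix.unitaryGroup (Fin N) ℂ)
    (s : ℂ) (m : ℕ) : ‖-(s ^ m * (M ^ (m + 1)).trace)‖ ≤ ‖s‖ ^ m * N := by
  rw [norm_neg, norm_mul, norm_pow]
  gcongr
  exact trBound M hM _

lemma prodSum (f g : ℕ → ℂ) (a b : ℂ) (C D : ℕ → ℝ) (hf : ∀ m, ‖f m‖ ≤ C m)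
    (hg : ∀ m, ‖g m‖ ≤ D m) (hC : Summable C) (hD : Summable D) (ha : HasSum f a)
    (hb : HasSum g b) : HasSum (fun p : ℕ × ℕ => f p.1 * g p.2) (a * b) := by
  have n1 : Summable fun m => ‖f m‖ := Summable.of_nonneg_of_le (fun _ => norm_nonneg _) hf hC
  have n2 : Summable fun m => ‖g m‖ := Summable.of_nonneg_of_le (fun _ => norm_nonneg _) hg hD
  exact ha.mul hb (summable_mul_of_summable_norm n1 n2)

lemma sumBound (N : ℕ) (s : ℂ) (hs : ‖s‖ < 1) : Summable fun m : ℕ => ‖s‖ ^ m * (N : ℝ) :=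
  (summable_geometric_of_lt_one (norm_nonneg _) hs).mul_right _

/-- Averages over `U(N)` of logarithmic derivatives with all `X` (or all `X*`), and of two
logarithmic derivatives both in `X`, vanish. -/
theorem stmt_15 (N : ℕ) (μ : Measure (Matrix.unitaryGroup (Fin N) ℂ))
    [IsProbabilityMeasure μ]
    (hHaar : ∀ A : Matrix.unitaryGroup (Fin N) ℂ,
      MeasurePreserving (fun X => A * X) μ μ)
    (α β : ℂ) (hα : 0 < α.re) (hβ : 0 < β.re) :
    (∫ X, deriv (Lam X) (Complex.exp (-α)) / Lam X (Complex.exp (-α)) ∂μ) = 0 ∧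
    (∫ X, deriv (LamStar X) (Complex.exp (-α)) / LamStar X (Complex.exp (-α)) ∂μ) = 0 ∧
    (∫ X, (deriv (Lam X) (Complex.exp (-α)) / Lam X (Complex.exp (-α))) *
        (deriv (Lam X) (Complex.exp (-β)) / Lam X (Complex.exp (-β))) ∂μ) = 0 := by
  have hs : ‖Complex.exp (-α)‖ < 1 := by
    rw [Complex.norm_exp, Real.exp_lt_one_iff]; simpa
  have ht : ‖Complex.exp (-β)‖ < 1 := by
    rw [Complex.norm_exp, Real.exp_lt_one_iff]; simpa
  generalize Complex.exp (-α) = s at *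
  generalize Complex.exp (-β) = t at *
  refine ⟨?_, ?_, ?_⟩
  · refine key μ hHaar
      (fun (m : ℕ) X => -(s ^ m * ((X : Matrix (Fin N) (Fin N) ℂ)ᴴ ^ (m + 1)).trace))
      (fun m => -((m + 1 : ℕ) : ℤ)) (fun m => by omega) (fun m => ‖s‖ ^ m * N) (sumBound N s hs)
      (fun m X => termBound _ (conjMem X) s m)
      (fun m => ((trMeas' (m + 1)).const_mul _).neg) (fun m u X => ?_) _
      (fun X => logDer _ (conjMem X) s hs)
    simp only [trScal']; ring
  · refine key μ hHaar
      (fun (m : ℕ) X => -(s ^ m * ((X : Matrix (Fin N) (Fin N) ℂ) ^ (m + 1)).trace))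
      (fun m => ((m + 1 : ℕ) : ℤ)) (fun m => by omega) (fun m => ‖s‖ ^ m * N) (sumBound N s hs)
      (fun m X => termBound _ X.2 s m)
      (fun m => ((trMeas (m + 1)).const_mul _).neg) (fun m u X => ?_) _
      (fun X => logDer _ X.2 s hs)
    simp only [trScal]; ring
  · refine key μ hHaar
      (fun (p : ℕ × ℕ) X => -(s ^ p.1 * ((X : Matrix (Fin N) (Fin N) ℂ)ᴴ ^ (p.1 + 1)).trace) *
        -(t ^ p.2 * ((X : Matrix (Fin N) (Fin N) ℂ)ᴴ ^ (p.2 + 1)).trace))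
      (fun p => -((p.1 + 1 : ℕ) : ℤ) + -((p.2 + 1 : ℕ) : ℤ)) (fun p => by omega)
      (fun p => (‖s‖ ^ p.1 * N) * (‖t‖ ^ p.2 * N))
      ((sumBound N s hs).mul_of_nonneg (sumBound N t ht) (fun _ => by positivity)
        (fun _ => by positivity))
      (fun p X => ?_)
      (fun p => ((trMeas' (p.1 + 1)).const_mul _).neg.mul ((trMeas' (p.2 + 1)).const_mul _).neg)
      (fun p u X => ?_)
      (fun X => deriv (Lam X) s / Lam X s * (deriv (Lam X) t / Lam X t)) (fun X => ?_)
    · rw [norm_mul]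
      exact mul_le_mul (termBound _ (conjMem X) s _) (termBound _ (conjMem X) t _)
        (norm_nonneg _) (by positivity)
    · simp only [trScal']
      rw [zpow_add₀ (Complex.exp_ne_zero _)]
      ring
    · exact prodSum (fun m => -(s ^ m * ((X : Matrix (Fin N) (Fin N) ℂ)ᴴ ^ (m + 1)).trace))
        (fun m => -(t ^ m * ((X : Matrix (Fin N) (Fin N) ℂ)ᴴ ^ (m + 1)).trace))
        (deriv (Lam X) s / Lam X s) (deriv (Lam X) t / Lam X t) (fun m => ‖s‖ ^ m * N)
        (fun m => ‖t‖ ^ m * N) (termBound _ (conjMem X) s) (termBound _ (conjMem X) t)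
        (sumBound N s hs) (sumBound N t ht)
        (logDer _ (conjMem X) s hs) (logDer _ (conjMem X) t ht)

end
end
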